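/- Let G be a separable real Banach space with the Gurarij property and let E be a separable real Banach space. Then E is g-embeddable in G: there exist a linear isometric embedding j : E → G and a group homomorphism Θ : Iso_L(E) → Iso_L(G) between the groups of surjective linear isometries, continuous for the topologies of pointwise convergence, such that (Θφ)(j(a)) = j(φ(a)) for every φ ∈ Iso_L(E) and every a ∈ E. -/

import Mathlib

/-!
The isometry group `Γ` of `E` is extended along an embedding of `E` into a separable space with the
extension property that characterises `G`, by a construction functorial enough to carry the action.

*One step.* A normed space `X` embeds isometrically in the bounded functions on its dual unit ball
by evaluation. To it are adjoined all functions `l ↦ max_i (l (z i) - r i)`, for finite tuples `z` in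
`X` and `r` in `ℝ`. A linear isometry `f` of `X` acts on functions through `l ↦ l ∘ f`, which maps the
function of `(z, r)` to that of `(f ∘ z, r)`, so every isometric action on `X` extends, and since the
function depends continuously on `(z, r)`, separability and continuity of orbit maps persist. Every
one-point extension of a finite-dimensional subspace of `X` is almost realised by one of these
functions (`exists_maxPt`): the `z i` run over a net in a large ball of the subspace and the `r i` are
the prescribed distances to the new point. The triangle inequality bounds the norm from above, and
Hahn–Banach in the amalgam of `X` with the extension (`exists_norming_pair`) bounds it from below.

*Limit.* In the limit `U` of the tower of such steps, exact one-point extensions of finite tuples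
are almost realised (`GSpace.exists_extExact`); by the Gurarij property this also holds in `G`
(`extExact_of_gurarij`). In both cases an amalgamation argument gives approximate extensions, in
the completion of `U` as well as in `G`, and a back-and-forth argument shows that the completion of
`U` is linearly isometric to `G` (`ExtApprox.nonempty_linearIsometryEquiv`). The action of `Γ` on
the dense subspace `U` then extends to `G` by continuity (`exists_extended_action`).

Finite-dimensional normed spaces are encoded throughout by seminorms on `J →₀ ℝ` restricted to the
families supported in a finite set, and two seminorms are compared relative to the `ℓ¹` norm. Linear
dependence among the vectors of a tuple then needs no special treatment.
-/

universe u v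

/-- A real normed space `G` has the *Gurarij property* if for every `ε > 0`, every
finite-dimensional real normed space `F`, every subspace `E₀ ⊆ F` and every linear
isometric embedding `ψ : E₀ → G`, there is a linear map `φ : F → G` extending `ψ` with
`(1 - ε)‖x‖ ≤ ‖φ x‖ ≤ (1 + ε)‖x‖` for all `x ∈ F`. -/
def GurarijProperty (G : Type*) [NormedAddCommGroup G] [NormedSpace ℝ G] : Prop :=
  ∀ ε : ℝ, 0 < ε →
    ∀ (F : Type) (_ : NormedAddCommGroup F) (_ : NormedSpace ℝ F), FiniteDimensional ℝ F →
      ∀ (E₀ : Submodule ℝ F) (ψ : E₀ →ₗᵢ[ℝ] G),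
        ∃ φ : F →ₗ[ℝ] G, (∀ x : E₀, φ (x : F) = ψ x) ∧
          ∀ x : F, (1 - ε) * ‖x‖ ≤ ‖φ x‖ ∧ ‖φ x‖ ≤ (1 + ε) * ‖x‖

/-- The topology of pointwise convergence on the group of surjective linear isometries of
a normed space. -/
def linIsoPtTop (E : Type*) [NormedAddCommGroup E] [NormedSpace ℝ E] :
    TopologicalSpace (E ≃ₗᵢ[ℝ] E) :=
  TopologicalSpace.induced (fun φ : E ≃ₗᵢ[ℝ] E => (φ : E → E)) inferInstance


/-! ### Seminorms on finitely supported coefficient families -/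

namespace Gurarij

open Finsupp Filter Topology

section Seminorms

variable {V W : Type*} [AddCommGroup V] [Module ℝ V] [AddCommGroup W] [Module ℝ W]

theorem infConv_bddBelow (T : W →ₗ[ℝ] V) (M : Seminorm ℝ V) (L : Seminorm ℝ W) (v : V) :
    BddBelow (Set.range fun w => M (v - T w) + L w) :=
  ⟨0, by rintro _ ⟨w, rfl⟩; positivity⟩

/-- The quotient seminorm `v ↦ inf_w (M (v - T w) + L w)`: the largest seminorm that is bounded
by `M` on `V` and by `L` along `T`. All amalgams of normed spaces used below are of this form. -/
noncomputable def infConv (T : W →ₗ[ℝ] V) (M : Seminorm ℝ V) (L : Seminorm ℝ W) :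
    Seminorm ℝ V :=
  Seminorm.ofSMulLE (fun v => ⨅ w, (M (v - T w) + L w))
    (le_antisymm ((ciInf_le (infConv_bddBelow T M L 0) 0).trans (by simp))
      (le_ciInf fun w => by positivity))
    (fun x y => by
      refine le_of_forall_pos_le_add fun ε hε => ?_
      obtain ⟨w, hw⟩ := exists_lt_of_ciInf_lt (lt_add_of_pos_right (⨅ w, (M (x - T w) + L w))
        (half_pos hε))
      obtain ⟨w', hw'⟩ := exists_lt_of_ciInf_lt (lt_add_of_pos_right (⨅ w, (M (y - T w) + L w))
        (half_pos hε))
      have h1 := ciInf_le (infConv_bddBelow T M L (x + y)) (w + w')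
      have h2 : M (x + y - T (w + w')) ≤ M (x - T w) + M (y - T w') := by
        rw [show x + y - T (w + w') = (x - T w) + (y - T w') by rw [map_add]; abel]
        exact map_add_le_add _ _ _
      have h3 := map_add_le_add L w w'
      linarith)
    (fun r x => by
      refine le_of_forall_pos_le_add fun ε hε => ?_
      have hr : 0 < ‖r‖ + 1 := by positivity
      obtain ⟨w, hw⟩ := exists_lt_of_ciInf_lt (lt_add_of_pos_right (⨅ w, (M (x - T w) + L w))
        (div_pos hε hr))
      have h1 := ciInf_le (infConv_bddBelow T M L (r • x)) (r • w)
      have h2 : M (r • x - T (r • w)) = ‖r‖ * M (x - T w) := by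
        rw [map_smul, ← smul_sub, map_smul_eq_mul]
      have h3 : L (r • w) = ‖r‖ * L w := map_smul_eq_mul _ _ _
      simp only [h2, h3] at h1
      have h4 : ‖r‖ * (M (x - T w) + L w) ≤ ‖r‖ * ((⨅ w, (M (x - T w) + L w)) + ε / (‖r‖ + 1)) :=
        mul_le_mul_of_nonneg_left hw.le (norm_nonneg _)
      have h5 : ‖r‖ * (ε / (‖r‖ + 1)) ≤ ε := by
        rw [mul_div_assoc', div_le_iff₀ hr]; nlinarith
      linarith)

theorem infConv_le (T : W →ₗ[ℝ] V) (M : Seminorm ℝ V) (L : Seminorm ℝ W) (v : V) (w : W) :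
    infConv T M L v ≤ M (v - T w) + L w :=
  ciInf_le (infConv_bddBelow T M L v) w

theorem le_infConv (T : W →ₗ[ℝ] V) (M : Seminorm ℝ V) (L : Seminorm ℝ W) {v : V} {C : ℝ}
    (h : ∀ w, C ≤ M (v - T w) + L w) : C ≤ infConv T M L v :=
  le_ciInf h

end Seminorms

variable {J : Type*}

/-- The `ℓ¹` norm on finitely supported families. -/
noncomputable def l1 : Seminorm ℝ (J →₀ ℝ) :=
  Seminorm.of (fun c => c.sum fun _ x => |x|)
    (fun c d => by
      classical
      have h : ∀ e : J →₀ ℝ, e.support ⊆ c.support ∪ d.support →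
          (e.sum fun _ x => |x|) = ∑ i ∈ c.support ∪ d.support, |e i| := fun e he =>
        Finsupp.sum_of_support_subset e he _ (by simp)
      rw [h _ Finsupp.support_add, h _ Finset.subset_union_left, h _ Finset.subset_union_right,
        ← Finset.sum_add_distrib]
      exact Finset.sum_le_sum fun i _ => abs_add_le _ _)
    (fun r c => by
      have h : ((r • c).sum fun _ x => |x|) = ∑ i ∈ c.support, |(r • c) i| :=
        Finsupp.sum_of_support_subset _ Finsupp.support_smul _ (by simp)
      rw [h, Finsupp.sum, Finset.mul_sum]
      simp [abs_mul])

theorem l1_apply (c : J →₀ ℝ) : l1 c = ∑ i ∈ c.support, |c i| := rfl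

@[simp] theorem l1_single (i : J) (t : ℝ) : l1 (single i t) = |t| := by
  change (single i t).sum (fun _ x => |x|) = |t|
  simp

theorem abs_le_l1 (c : J →₀ ℝ) (i : J) : |c i| ≤ l1 c := by
  rw [l1_apply]
  by_cases h : i ∈ c.support
  · exact Finset.single_le_sum (f := fun i => |c i|) (fun _ _ => abs_nonneg _) h
  · rw [Finsupp.notMem_support_iff.1 h, abs_zero]
    exact Finset.sum_nonneg fun _ _ => abs_nonneg _

/-- The `ℓ¹` norm dominates every seminorm that is bounded on the basis vectors. -/
theorem seminorm_le_l1 (q : Seminorm ℝ (J →₀ ℝ)) (s : Set J) (M : ℝ)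
    (h : ∀ i ∈ s, q (single i 1) ≤ M) (c : J →₀ ℝ) (hc : c ∈ supported ℝ ℝ s) :
    q c ≤ M * l1 c := by
  have h1 : q c ≤ ∑ i ∈ c.support, q (single i (c i)) := by
    conv_lhs => rw [← Finsupp.sum_single c]
    exact Finset.le_sum_of_subadditive q (map_zero q).le (fun x y => map_add_le_add q x y) _ _
  refine h1.trans ?_
  rw [l1_apply, Finset.mul_sum]
  refine Finset.sum_le_sum fun i hi => ?_
  have : single i (c i) = c i • single i (1 : ℝ) := by simp
  rw [this, map_smul_eq_mul, Real.norm_eq_abs, mul_comm]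
  exact mul_le_mul_of_nonneg_right (h i ((mem_supported ℝ c).1 hc hi)) (abs_nonneg _)

theorem exists_seminorm_le_l1 (q : Seminorm ℝ (J →₀ ℝ)) (s : Finset J) :
    ∃ M, 0 ≤ M ∧ ∀ c ∈ supported ℝ ℝ (s : Set J), q c ≤ M * l1 c := by
  refine ⟨∑ i ∈ s, q (single i 1), Finset.sum_nonneg fun _ _ => apply_nonneg _ _, ?_⟩
  exact fun c hc => seminorm_le_l1 q s _ (fun i hi =>
    Finset.single_le_sum (f := fun i => q (single i 1)) (fun _ _ => apply_nonneg _ _) hi) c hc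

/-- Two seminorms on coefficient families are `ε`-close on the families supported in `s`, relative
to the `ℓ¹` norm. Measuring the defect in `ℓ¹` makes linear independence irrelevant. -/
def Close (s : Finset J) (ε : ℝ) (p q : Seminorm ℝ (J →₀ ℝ)) : Prop :=
  ∀ c ∈ supported ℝ ℝ (s : Set J), |p c - q c| ≤ ε * l1 c

theorem Close.symm {s : Finset J} {ε : ℝ} {p q : Seminorm ℝ (J →₀ ℝ)} (h : Close s ε p q) :
    Close s ε q p := fun c hc => by rw [abs_sub_comm]; exact h c hc

theorem Close.mono {s : Finset J} {ε ε' : ℝ} {p q : Seminorm ℝ (J →₀ ℝ)} (h : Close s ε p q)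
    (hε : ε ≤ ε') : Close s ε' p q := fun c hc =>
  (h c hc).trans (mul_le_mul_of_nonneg_right hε (apply_nonneg _ _))

theorem Close.trans {s : Finset J} {ε ε' : ℝ} {p q r : Seminorm ℝ (J →₀ ℝ)} (h : Close s ε p q)
    (h' : Close s ε' q r) : Close s (ε + ε') p r := fun c hc => by
  have h1 := abs_sub_le (p c) (q c) (r c)
  have := h c hc
  have := h' c hc
  linarith

section Tuples

variable {X : Type*} [SeminormedAddCommGroup X] [NormedSpace ℝ X]

/-- The seminorm `c ↦ ‖∑ cᵢ aᵢ‖` that a family `a` of vectors induces on coefficients. -/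
noncomputable def tupNorm (a : J → X) : Seminorm ℝ (J →₀ ℝ) :=
  (normSeminorm ℝ X).comp (linearCombination ℝ a)

theorem tupNorm_apply (a : J → X) (c : J →₀ ℝ) : tupNorm a c = ‖linearCombination ℝ a c‖ := rfl

theorem linearCombination_congr {a b : J → X} {s : Set J} (h : ∀ i ∈ s, a i = b i)
    {c : J →₀ ℝ} (hc : c ∈ supported ℝ ℝ s) :
    linearCombination ℝ a c = linearCombination ℝ b c := by
  rw [linearCombination_apply, linearCombination_apply]
  exact Finset.sum_congr rfl fun i hi => by
    simp only [h i ((mem_supported ℝ c).1 hc hi)]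

theorem close_of_norm_sub_le {a b : J → X} {s : Finset J} {η : ℝ}
    (h : ∀ i ∈ s, ‖a i - b i‖ ≤ η) : Close s η (tupNorm a) (tupNorm b) := by
  intro c hc
  have h1 := seminorm_le_l1 (tupNorm (a - b)) s η (fun i hi => by
    simpa [tupNorm_apply] using h i hi) c hc
  refine le_trans ?_ h1
  rw [tupNorm_apply, tupNorm_apply, tupNorm_apply]
  refine (abs_norm_sub_norm_le _ _).trans (le_of_eq ?_)
  congr 1
  simp [linearCombination_apply, Finsupp.sum, smul_sub, Finset.sum_sub_distrib]

theorem tupNorm_comp_isometry {Y : Type*} [SeminormedAddCommGroup Y] [NormedSpace ℝ Y]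
    (e : X →ₗᵢ[ℝ] Y) (a : J → X) : tupNorm (fun i => e (a i)) = tupNorm a := by
  ext c
  rw [tupNorm_apply, tupNorm_apply, ← e.norm_map]
  congr 1
  simp [linearCombination_apply, Finsupp.sum]

end Tuples

/-! ### One-point extension properties -/

/-- Exact one-point extensions are almost realised: whenever a seminorm `q` on coefficients
extends the one induced by a finite tuple of `X`, one further vector of `X` realises `q` on one
further index, up to an arbitrarily small error. -/
def ExtExact (X : Type*) [SeminormedAddCommGroup X] [NormedSpace ℝ X] : Prop :=
  ∀ (J : Type) [DecidableEq J] (s : Finset J) (j : J) (a : J → X) (q : Seminorm ℝ (J →₀ ℝ)),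
    j ∉ s → (∀ c ∈ supported ℝ ℝ (s : Set J), tupNorm a c = q c) → ∀ δ : ℝ, 0 < δ →
      ∃ a' : J → X, (∀ i ∈ s, a' i = a i) ∧ Close (insert j s) δ (tupNorm a') q

/-- Approximate extensions: if `q` is `ε`-close to the seminorm of a finite tuple of `X`, then the
tuple extends to further indices so that it stays `ε'`-close to `q`, for any `ε' > ε`. -/
def ExtApprox (X : Type*) [SeminormedAddCommGroup X] [NormedSpace ℝ X] : Prop :=
  ∀ (J : Type) [DecidableEq J] (s t : Finset J) (a : J → X) (q : Seminorm ℝ (J →₀ ℝ)) (ε ε' : ℝ),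
    0 ≤ ε → ε < ε' → Close s ε (tupNorm a) q →
      ∃ a' : J → X, (∀ i ∈ s, a' i = a i) ∧ Close (s ∪ t) ε' (tupNorm a') q

/-- Passing from exact to approximate data, and from `U` to a space in which `U` is dense. The
seminorm `q` is replaced by its amalgam with the norm of the tuple, which extends the latter
exactly and is still `ε`-close to `q`. -/
theorem ExtExact.approx_one {U X : Type*} [SeminormedAddCommGroup U] [NormedSpace ℝ U]
    [SeminormedAddCommGroup X] [NormedSpace ℝ X] (hU : ExtExact U) (e : U →ₗᵢ[ℝ] X)
    (he : DenseRange e) (J : Type) [DecidableEq J] (s : Finset J) (j : J) (a : J → X)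
    (q : Seminorm ℝ (J →₀ ℝ)) (ε ε' : ℝ) (hε : 0 ≤ ε) (hεε : ε < ε')
    (h : Close s ε (tupNorm a) q) :
    ∃ a' : J → X, (∀ i ∈ s, a' i = a i) ∧ Close (insert j s) ε' (tupNorm a') q := by
  by_cases hj : j ∈ s
  · rw [Finset.insert_eq_of_mem hj]
    exact ⟨a, fun _ _ => rfl, h.mono hεε.le⟩
  obtain ⟨η, hη, hη'⟩ : ∃ η : ℝ, 0 < η ∧ η + (η + (ε + η)) ≤ ε' :=
    ⟨(ε' - ε) / 3, by linarith, by linarith⟩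
  have hb : ∀ i, ∃ b : U, ‖a i - e b‖ < η := fun i => by
    obtain ⟨b, hb⟩ := he.exists_dist_lt (a i) hη
    exact ⟨b, by rwa [← dist_eq_norm]⟩
  choose b hb using hb
  have hclose : Close s (ε + η) (tupNorm b) q := by
    have h1 : Close s η (tupNorm fun i => e (b i)) (tupNorm a) :=
      (close_of_norm_sub_le fun i _ => (hb i).le).symm
    rw [tupNorm_comp_isometry] at h1
    exact (h1.trans h).mono (by linarith)
  have hκ : 0 ≤ ε + η := by linarith
  -- the amalgam of `q + (ε + η) ℓ¹` with the norm of `b` along the families supported in `s`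
  set κ : NNReal := ⟨ε + η, hκ⟩ with hκdef
  let q₂ : Seminorm ℝ (J →₀ ℝ) := q + κ • l1
  have hq₂ : ∀ c, q₂ c = q c + (ε + η) * l1 c := fun c => rfl
  let S := supported ℝ ℝ (s : Set J)
  let L : Seminorm ℝ S := (tupNorm b).comp S.subtype
  let q' : Seminorm ℝ (J →₀ ℝ) := infConv S.subtype q₂ L
  have hq'1 : ∀ c ∈ S, tupNorm b c = q' c := by
    intro c hc
    refine le_antisymm (le_infConv _ _ _ fun w => ?_) ?_
    · have h1 := abs_le.1 (hclose (c - w) (S.sub_mem hc w.2))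
      have h2 := map_add_le_add (tupNorm b) (c - w) w
      rw [sub_add_cancel] at h2
      rw [hq₂]
      change _ ≤ q (c - (w : J →₀ ℝ)) + (ε + η) * l1 (c - (w : J →₀ ℝ)) + tupNorm b w
      linarith
    · refine (infConv_le _ _ _ c ⟨c, hc⟩).trans ?_
      simp [L]
  have hq'2 : Close (insert j s) (ε + η) q' q := by
    intro c _
    rw [abs_le]
    constructor
    · have : q c - (ε + η) * l1 c ≤ q' c := by
        refine le_infConv _ _ _ fun w => ?_
        have h1 := abs_le.1 (hclose w w.2)
        have h2 := map_add_le_add q (c - (w : J →₀ ℝ)) w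
        have h3 : l1 (w : J →₀ ℝ) ≤ l1 c + l1 (c - (w : J →₀ ℝ)) := by
          have := map_sub_le_add l1 c (c - (w : J →₀ ℝ))
          rwa [sub_sub_cancel] at this
        rw [sub_add_cancel] at h2
        rw [hq₂]
        change _ ≤ q (c - (w : J →₀ ℝ)) + (ε + η) * l1 (c - (w : J →₀ ℝ)) + tupNorm b w
        have h4 := mul_le_mul_of_nonneg_left h3 hκ
        linarith
      linarith
    · have := infConv_le S.subtype q₂ L c 0
      rw [map_zero, map_zero, sub_zero, add_zero, hq₂] at this
      change q' c ≤ _ at this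
      linarith
  obtain ⟨b', hb', hb'c⟩ := hU J s j b q' hj hq'1 η hη
  refine ⟨fun i => if i = j then e (b' i) else a i, fun i hi => ?_, ?_⟩
  · exact if_neg (by rintro rfl; exact hj hi)
  · have h1 : Close (insert j s) η (tupNorm fun i => if i = j then e (b' i) else a i)
        (tupNorm fun i => e (b' i)) := by
      refine close_of_norm_sub_le fun i hi => ?_
      by_cases hij : i = j
      · simp [hij, hη.le]
      · have hi' : i ∈ s := (Finset.mem_insert.1 hi).resolve_left hij
        simp only [hij, if_false]
        rw [hb' i hi']
        exact (hb i).le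
    rw [tupNorm_comp_isometry] at h1
    exact (h1.trans (hb'c.trans hq'2)).mono hη'

/-- New indices are added one at a time, each increasing the error by a fraction of the room left. -/
theorem ExtExact.approx {U X : Type*} [SeminormedAddCommGroup U] [NormedSpace ℝ U]
    [SeminormedAddCommGroup X] [NormedSpace ℝ X] (hU : ExtExact U) (e : U →ₗᵢ[ℝ] X)
    (he : DenseRange e) : ExtApprox X := by
  intro J _ s t a q ε ε' hε hεε h
  induction t using Finset.induction_on generalizing ε' with
  | empty => exact ⟨a, fun _ _ => rfl, by rw [Finset.union_empty]; exact h.mono hεε.le⟩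
  | insert j t _ ih =>
    obtain ⟨a', ha', hc⟩ := ih ((ε + ε') / 2) (by linarith)
    obtain ⟨a'', ha'', hc'⟩ := hU.approx_one e he J (s ∪ t) j a' q _ ε' (by linarith)
      (by linarith : (ε + ε') / 2 < ε') hc
    refine ⟨a'', fun i hi => ?_, ?_⟩
    · rw [ha'' i (Finset.mem_union_left _ hi), ha' i hi]
    · rwa [Finset.union_insert]

/-- Correcting a tuple: if `q` is `ε`-close to the seminorm of a finite tuple, then moving the
tuple by `ε + δ` and extending it makes it `δ`-close to `q`. The extension is carried out in the
amalgam of two copies of the coefficient space, glued with error `ε`. -/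
theorem ExtApprox.perturb {X : Type*} [SeminormedAddCommGroup X] [NormedSpace ℝ X]
    (hX : ExtApprox X) (J : Type) [DecidableEq J] (s t : Finset J) (a : J → X)
    (q : Seminorm ℝ (J →₀ ℝ)) (ε δ : ℝ) (hε : 0 ≤ ε) (hδ : 0 < δ)
    (h : Close s ε (tupNorm a) q) :
    ∃ a' : J → X, (∀ i ∈ s, ‖a' i - a i‖ ≤ ε + δ) ∧ Close t δ (tupNorm a') q := by
  let S := supported ℝ ℝ (s : Set J)
  let E₁ := lmapDomain ℝ ℝ (Sum.inl : J → J ⊕ J)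
  let E₂ := lmapDomain ℝ ℝ (Sum.inr : J → J ⊕ J)
  let P₁ := lcomapDomain (R := ℝ) (M := ℝ) (Sum.inl : J → J ⊕ J) Sum.inl_injective
  let P₂ := lcomapDomain (R := ℝ) (M := ℝ) (Sum.inr : J → J ⊕ J) Sum.inr_injective
  have h11 : ∀ c, P₁ (E₁ c) = c := fun c => comapDomain_mapDomain _ Sum.inl_injective c
  have h22 : ∀ c, P₂ (E₂ c) = c := fun c => comapDomain_mapDomain _ Sum.inr_injective c
  have h12 : ∀ c, P₁ (E₂ c) = 0 := fun c => by
    ext i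
    exact mapDomain_of_notMem_range _ _ (by simp)
  have h21 : ∀ c, P₂ (E₁ c) = 0 := fun c => by
    ext i
    exact mapDomain_of_notMem_range _ _ (by simp)
  let M : Seminorm ℝ (J ⊕ J →₀ ℝ) := (tupNorm a).comp P₁ + q.comp P₂
  let T : S →ₗ[ℝ] (J ⊕ J →₀ ℝ) := (E₁ - E₂).comp S.subtype
  let κ : NNReal := ⟨ε, hε⟩
  let L : Seminorm ℝ S := (κ • l1).comp S.subtype
  have hL : ∀ w : S, L w = ε * l1 (w : J →₀ ℝ) := fun w => rfl
  have hM : ∀ (u v : J →₀ ℝ) (w : S), M (E₁ u + E₂ v - T w) =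
      tupNorm a (u - w) + q (v + w) := by
    intro u v w
    change tupNorm a (P₁ (E₁ u + E₂ v - (E₁ w - E₂ w))) +
      q (P₂ (E₁ u + E₂ v - (E₁ w - E₂ w))) = _
    simp only [map_sub, map_add, h11, h22, h12, h21]
    simp
  -- `N` extends the seminorm of `a` on the first copy and `q` on the second, and corresponding
  -- basis vectors with index in `s` are at distance at most `ε`
  let N := infConv T M L
  have hN1 : ∀ c ∈ S, tupNorm a c = N (E₁ c) := by
    intro c hc
    refine le_antisymm (le_infConv _ _ _ fun w => ?_) ?_
    · have h0 := hM c 0 w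
      rw [map_zero, add_zero, zero_add] at h0
      rw [h0, hL]
      have h1 := abs_le.1 (h w w.2)
      have h2 := map_add_le_add (tupNorm a) (c - w) w
      rw [sub_add_cancel] at h2
      linarith
    · refine (infConv_le _ _ _ _ 0).trans ?_
      have h0 := hM c 0 0
      rw [map_zero, add_zero, zero_add] at h0
      rw [h0]
      simp
  have hN2 : ∀ c, N (E₂ c) = q c := by
    intro c
    refine le_antisymm ?_ (le_infConv _ _ _ fun w => ?_)
    · refine (infConv_le _ _ _ _ 0).trans ?_
      have h0 := hM 0 c 0
      rw [map_zero, zero_add] at h0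
      rw [h0]
      simp
    · have h0 := hM 0 c w
      rw [map_zero, zero_add, zero_sub, map_neg_eq_map] at h0
      rw [h0, hL]
      have h1 := abs_le.1 (h w w.2)
      have h2 := map_sub_le_add q (c + w) w
      rw [add_sub_cancel_right] at h2
      linarith
  have hN3 : ∀ i ∈ s, N (single (Sum.inl i) 1 - single (Sum.inr i) 1) ≤ ε := by
    intro i hi
    have hw : single i (1 : ℝ) ∈ S := single_mem_supported ℝ 1 hi
    refine (infConv_le _ _ _ _ ⟨_, hw⟩).trans ?_
    have h0 : T ⟨_, hw⟩ = single (Sum.inl i) 1 - single (Sum.inr i) 1 := by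
      simp [T, E₁, E₂]
    rw [h0, sub_self, map_zero, zero_add, hL]
    simp
  have hsupp : ∀ c ∈ supported ℝ ℝ ((s.map .inl : Finset (J ⊕ J)) : Set (J ⊕ J)),
      ∃ u ∈ S, c = E₁ u := by
    intro c hc
    have hc' : c ∈ (supported ℝ ℝ (s : Set J)).map E₁ := by
      rw [lmapDomain_supported]
      simpa using hc
    obtain ⟨u, hu, rfl⟩ := hc'
    exact ⟨u, hu, rfl⟩
  obtain ⟨a', ha', hclose⟩ := hX (J ⊕ J) (s.map .inl) (t.map .inr ∪ s.map .inr)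
    (Sum.elim a 0) N 0 (δ / 2) le_rfl (half_pos hδ) (by
      intro c hc
      obtain ⟨u, hu, rfl⟩ := hsupp c hc
      have : tupNorm (Sum.elim a (0 : J → X)) (E₁ u) = tupNorm a u := by
        rw [tupNorm_apply, tupNorm_apply]
        simp [E₁, linearCombination_mapDomain]
      rw [this, hN1 u hu]
      simp)
  refine ⟨fun i => a' (Sum.inr i), fun i hi => ?_, fun c hc => ?_⟩
  · have h1 := abs_le.1 (hclose (single (Sum.inl i) 1 - single (Sum.inr i) 1)
      (Submodule.sub_mem _ (single_mem_supported ℝ 1 (by simp [hi]))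
        (single_mem_supported ℝ 1 (by simp [hi]))))
    have h2 : tupNorm a' (single (Sum.inl i) 1 - single (Sum.inr i) 1)
        = ‖a' (Sum.inr i) - a i‖ := by
      have h3 := ha' (Sum.inl i) (by simp [hi])
      rw [Sum.elim_inl] at h3
      rw [tupNorm_apply, norm_sub_rev, ← h3]
      simp
    have h3 : l1 (single (Sum.inl i) (1 : ℝ) - single (Sum.inr i) (1 : ℝ)) ≤ 2 := by
      refine (map_sub_le_add l1 _ _).trans ?_
      simp; norm_num
    have h4 := hN3 i hi
    rw [h2] at h1
    nlinarith
  · have hm : E₂ c ∈ supported ℝ ℝ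
        ((s.map .inl ∪ (t.map .inr ∪ s.map .inr) : Finset (J ⊕ J)) : Set (J ⊕ J)) := by
      have : E₂ c ∈ (supported ℝ ℝ (t : Set J)).map E₂ := Submodule.mem_map_of_mem hc
      rw [lmapDomain_supported] at this
      refine supported_mono ?_ this
      intro x hx
      obtain ⟨y, hy, rfl⟩ := hx
      simp only [Finset.coe_union, Finset.coe_map]
      exact Or.inr (Or.inl ⟨y, hy, rfl⟩)
    have h1 := hclose _ hm
    rw [hN2] at h1
    have h2 : tupNorm a' (E₂ c) = tupNorm (fun i => a' (Sum.inr i)) c := by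
      rw [tupNorm_apply, tupNorm_apply]
      simp [E₂, linearCombination_mapDomain, Function.comp_def]
    have h3 : l1 (E₂ c) = l1 c := by
      change (mapDomain Sum.inr c).sum (fun _ x => |x|) = _
      rw [sum_mapDomain_index_inj Sum.inr_injective]
      rfl
    rw [h2, h3] at h1
    have := apply_nonneg l1 c
    refine h1.trans ?_
    nlinarith

/-! ### Back and forth -/

theorem tupNorm_congr {X : Type*} [SeminormedAddCommGroup X] [NormedSpace ℝ X] {a b : J → X}
    {s : Set J} (h : ∀ i ∈ s, a i = b i) {c : J →₀ ℝ} (hc : c ∈ supported ℝ ℝ s) :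
    tupNorm a c = tupNorm b c := by
  rw [tupNorm_apply, tupNorm_apply, linearCombination_congr h hc]

/-- Limits of the back-and-forth sequences: the `i`-th vector is present from stage `i / 2 + 1` on,
and from then on it moves by a geometrically decreasing amount. -/
theorem exists_limit_of_geometric {X : Type*} [NormedAddCommGroup X] [CompleteSpace X]
    (u : ℕ → ℕ → X) (h : ∀ k i, i < 2 * k → ‖u (k + 1) i - u k i‖ ≤ 2 * (1 / 2) ^ k) :
    ∃ v : ℕ → X, ∀ k i, i < 2 * k → ‖u k i - v i‖ ≤ 4 * (1 / 2) ^ k := by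
  have hd : ∀ i k, i < 2 * k → ∀ n, dist (u (n + k) i) (u (n + 1 + k) i) ≤
      (2 * (1 / 2) ^ k) * (1 / 2) ^ n := by
    intro i k hik n
    rw [dist_comm, dist_eq_norm, show n + 1 + k = n + k + 1 by ring]
    refine (h (n + k) i (by omega)).trans (le_of_eq ?_)
    rw [pow_add]; ring
  have hlim : ∀ i, ∃ v, Tendsto (fun k => u k i) atTop (𝓝 v) := by
    intro i
    obtain ⟨v, hv⟩ := cauchySeq_tendsto_of_complete
      (cauchySeq_of_le_geometric (1 / 2) _ (by norm_num) (hd i (i + 1) (by omega)))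
    exact ⟨v, (tendsto_add_atTop_iff_nat (i + 1)).1 hv⟩
  choose v hv using hlim
  refine ⟨v, fun k i hik => ?_⟩
  have h1 := dist_le_of_le_geometric_of_tendsto₀ (1 / 2) _ (by norm_num) (hd i k hik)
    ((tendsto_add_atTop_iff_nat k).2 (hv i))
  rw [zero_add, dist_eq_norm] at h1
  refine h1.trans (le_of_eq ?_)
  ring

/-- The limit vectors span a dense subspace: the `idx k`-th one approximates the term of the dense
sequence scheduled at stage `k`, and every term is scheduled infinitely often. -/
theorem denseRange_linearCombination {X : Type*} [NormedAddCommGroup X] [NormedSpace ℝ X]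
    (d v : ℕ → X) (hd : DenseRange d) (idx : ℕ → ℕ)
    (h : ∀ k, ‖v (idx k) - d (Nat.unpair k).1‖ ≤ 8 * (1 / 2) ^ k) :
    DenseRange (linearCombination ℝ v) := by
  rw [Metric.denseRange_iff]
  intro x r hr
  obtain ⟨n, hn⟩ := hd.exists_dist_lt x (half_pos hr)
  obtain ⟨m, hm⟩ := exists_pow_lt_of_lt_one (show 0 < r / 16 by positivity)
    (show (1 / 2 : ℝ) < 1 by norm_num)
  -- every term of `d` is revisited at arbitrarily late stages
  have h1 := h (Nat.pair n m)
  rw [Nat.unpair_pair] at h1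
  have h2 : (1 / 2 : ℝ) ^ (Nat.pair n m) ≤ (1 / 2) ^ m :=
    pow_le_pow_of_le_one (by norm_num) (by norm_num) (Nat.right_le_pair n m)
  refine ⟨single (idx (Nat.pair n m)) 1, ?_⟩
  rw [linearCombination_single, one_smul]
  have h3 := dist_triangle x (d n) (v (idx (Nat.pair n m)))
  rw [dist_comm (d n), dist_eq_norm (v _)] at h3
  simp only at h1
  linarith

section Uniqueness

variable {X : Type*} [NormedAddCommGroup X] [NormedSpace ℝ X]
  {Y : Type*} [NormedAddCommGroup Y] [NormedSpace ℝ Y]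

/-- One round of the back-and-forth: the vector `y` is added on the `Y` side and matched in `X`,
then `x` is added on the `X` side and matched in `Y`; the earlier vectors move by at most
`2 * 2⁻ᵏ` and the defect is halved. -/
theorem backAndForth_step (hX : ExtApprox X) (hY : ExtApprox Y) (k : ℕ) (a : ℕ → X) (b : ℕ → Y)
    (x : X) (y : Y)
    (h : Close (Finset.range (2 * k)) ((1 / 2) ^ k) (tupNorm a) (tupNorm b)) :
    ∃ (a' : ℕ → X) (b' : ℕ → Y),
      Close (Finset.range (2 * (k + 1))) ((1 / 2) ^ (k + 1)) (tupNorm a') (tupNorm b') ∧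
      (∀ i, i < 2 * k → ‖a' i - a i‖ ≤ 2 * (1 / 2) ^ k) ∧
      (∀ i, i < 2 * k → ‖b' i - b i‖ ≤ 2 * (1 / 2) ^ k) ∧
      a' (2 * k + 1) = x ∧ ‖b' (2 * k) - y‖ ≤ 2 * (1 / 2) ^ k := by
  have hpos : (0 : ℝ) < (1 / 2) ^ k := by positivity
  have hs : ((1 / 2 : ℝ)) ^ (k + 1) = (1 / 2) ^ k / 2 := by rw [pow_succ]; ring
  have h1 : Close (Finset.range (2 * k)) ((1 / 2) ^ k) (tupNorm a)
      (tupNorm (Function.update b (2 * k) y)) := by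
    intro c hc
    rw [← tupNorm_congr (a := b) (fun i hi => ?_) hc]
    · exact h c hc
    · have : i < 2 * k := by simpa using hi
      rw [Function.update_of_ne (by omega)]
  obtain ⟨a₁, ha₁, hc₁⟩ := hX.perturb ℕ _ (Finset.range (2 * k + 1)) a _ _ ((1 / 2) ^ (k + 1))
    hpos.le (by positivity) h1
  have h2 : Close (Finset.range (2 * k + 1)) ((1 / 2) ^ (k + 1))
      (tupNorm (Function.update b (2 * k) y)) (tupNorm (Function.update a₁ (2 * k + 1) x)) := by
    intro c hc
    rw [← tupNorm_congr (a := a₁) (fun i hi => ?_) hc]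
    · exact hc₁.symm c hc
    · have : i < 2 * k + 1 := by simpa using hi
      rw [Function.update_of_ne (by omega)]
  obtain ⟨b₂, hb₂, hc₂⟩ := hY.perturb ℕ _ (Finset.range (2 * (k + 1))) _ _ _ ((1 / 2) ^ (k + 1))
    (by positivity) (by positivity) h2
  refine ⟨Function.update a₁ (2 * k + 1) x, b₂, hc₂.symm, fun i hi => ?_, fun i hi => ?_,
    Function.update_self .., ?_⟩
  · rw [Function.update_of_ne (by omega)]
    have := ha₁ i (by simpa using hi)
    linarith
  · have := hb₂ i (by simp; omega)
    rw [Function.update_of_ne (by omega)] at this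
    linarith
  · have := hb₂ (2 * k) (by simp)
    rw [Function.update_self] at this
    linarith

/-- Two separable Banach spaces with the approximate extension property are linearly isometric. -/
theorem ExtApprox.nonempty_linearIsometryEquiv [CompleteSpace X] [CompleteSpace Y]
    [TopologicalSpace.SeparableSpace X] [TopologicalSpace.SeparableSpace Y]
    (hX : ExtApprox X) (hY : ExtApprox Y) : Nonempty (X ≃ₗᵢ[ℝ] Y) := by
  let d := TopologicalSpace.denseSeq X
  let e := TopologicalSpace.denseSeq Y
  let St : ℕ → Type _ := fun k => {p : (ℕ → X) × (ℕ → Y) //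
    Close (Finset.range (2 * k)) ((1 / 2) ^ k) (tupNorm p.1) (tupNorm p.2)}
  have hstep : ∀ k (p : St k), ∃ p' : St (k + 1),
      (∀ i, i < 2 * k → ‖p'.1.1 i - p.1.1 i‖ ≤ 2 * (1 / 2) ^ k) ∧
      (∀ i, i < 2 * k → ‖p'.1.2 i - p.1.2 i‖ ≤ 2 * (1 / 2) ^ k) ∧
      p'.1.1 (2 * k + 1) = d (Nat.unpair k).1 ∧
      ‖p'.1.2 (2 * k) - e (Nat.unpair k).1‖ ≤ 2 * (1 / 2) ^ k := by
    rintro k ⟨⟨a, b⟩, h⟩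
    obtain ⟨a', b', h1, h2⟩ := backAndForth_step hX hY k a b (d (Nat.unpair k).1)
      (e (Nat.unpair k).1) h
    exact ⟨⟨(a', b'), h1⟩, h2⟩
  choose next hn1 hn2 hn3 hn4 using hstep
  have h0 : Close (Finset.range (2 * 0)) ((1 / 2) ^ 0) (tupNorm (0 : ℕ → X))
      (tupNorm (0 : ℕ → Y)) := by
    intro c hc
    have : c = 0 := by simpa using hc
    simp [this]
  let P : ∀ k, St k := fun k => Nat.rec (motive := St) ⟨(0, 0), h0⟩ next k
  obtain ⟨v, hv⟩ := exists_limit_of_geometric (fun k => (P k).1.1) fun k => hn1 k (P k)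
  obtain ⟨w, hw⟩ := exists_limit_of_geometric (fun k => (P k).1.2) fun k => hn2 k (P k)
  have hvd : DenseRange (linearCombination ℝ v) := by
    refine denseRange_linearCombination d v (TopologicalSpace.denseRange_denseSeq X)
      (fun k => 2 * k + 1) fun k => ?_
    have h1 := hv (k + 1) (2 * k + 1) (by omega)
    have h2 : (P (k + 1)).1.1 (2 * k + 1) = d (Nat.unpair k).1 := hn3 k (P k)
    simp only [h2] at h1
    rw [norm_sub_rev]
    refine h1.trans ?_
    have : (0 : ℝ) < (1 / 2) ^ k := by positivity
    rw [pow_succ]; linarith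
  have hwd : DenseRange (linearCombination ℝ w) := by
    refine denseRange_linearCombination e w (TopologicalSpace.denseRange_denseSeq Y)
      (fun k => 2 * k) fun k => ?_
    have h1 := hw (k + 1) (2 * k) (by omega)
    have h2 : ‖(P (k + 1)).1.2 (2 * k) - e (Nat.unpair k).1‖ ≤ 2 * (1 / 2) ^ k := hn4 k (P k)
    have h3 := norm_sub_le_norm_sub_add_norm_sub (w (2 * k)) ((P (k + 1)).1.2 (2 * k))
      (e (Nat.unpair k).1)
    rw [norm_sub_rev (w (2 * k)) ((P (k + 1)).1.2 (2 * k))] at h3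
    have : (0 : ℝ) < (1 / 2) ^ k := by positivity
    have hs : ((1 / 2 : ℝ)) ^ (k + 1) = (1 / 2) ^ k / 2 := by rw [pow_succ]; ring
    simp only [hs] at h1
    linarith
  have hnorm : ∀ c : ℕ →₀ ℝ, ‖linearCombination ℝ w c‖ = ‖linearCombination ℝ v c‖ := by
    intro c
    have hlim : Tendsto (fun k : ℕ => (9 * (1 / 2 : ℝ) ^ k) * l1 c) atTop (𝓝 0) := by
      have := ((tendsto_pow_atTop_nhds_zero_of_lt_one (r := (1 / 2 : ℝ)) (by norm_num)
        (by norm_num)).const_mul 9).mul_const (l1 c)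
      simpa using this
    have hle : |tupNorm w c - tupNorm v c| ≤ 0 := by
      refine ge_of_tendsto hlim ?_
      obtain ⟨m, hm⟩ := c.support.exists_nat_subset_range
      filter_upwards [eventually_ge_atTop m] with k hk
      have hc : c ∈ supported ℝ ℝ (Finset.range (2 * k) : Set ℕ) := by
        rw [mem_supported]
        exact_mod_cast hm.trans (Finset.range_subset_range.2 (by omega))
      have h1 : Close (Finset.range (2 * k)) (4 * (1 / 2) ^ k) (tupNorm w) (tupNorm (P k).1.2) :=
        (close_of_norm_sub_le fun i hi => hw k i (Finset.mem_range.1 hi)).symm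
      have h2 : Close (Finset.range (2 * k)) (4 * (1 / 2) ^ k) (tupNorm (P k).1.1) (tupNorm v) :=
        close_of_norm_sub_le fun i hi => hv k i (Finset.mem_range.1 hi)
      exact ((h1.trans ((P k).2.symm.trans h2)).mono (by linarith)) c hc
    exact sub_eq_zero.1 (abs_nonpos_iff.1 hle)
  exact ⟨(LinearEquiv.refl ℝ (ℕ →₀ ℝ)).extendOfIsometry (linearCombination ℝ v)
    (linearCombination ℝ w) hvd hwd hnorm⟩

end Uniqueness

/-! ### The Gurarij property gives extensions -/

/-- The Gurarij property for seminormed domains, obtained by passing to the quotient by the null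
space. -/
theorem gurarij_seminorm {G : Type*} [NormedAddCommGroup G] [NormedSpace ℝ G]
    (hG : GurarijProperty G) (V : Type) [AddCommGroup V] [Module ℝ V] [FiniteDimensional ℝ V]
    (q : Seminorm ℝ V) (S : Submodule ℝ V) (f : S →ₗ[ℝ] G) (hf : ∀ x, ‖f x‖ = q x) (ε : ℝ)
    (hε : 0 < ε) :
    ∃ φ : V →ₗ[ℝ] G, (∀ x : S, φ x = f x) ∧ ∀ x, |‖φ x‖ - q x| ≤ ε * q x := by
  let _ : SeminormedAddCommGroup V := q.toAddGroupSeminorm.toSeminormedAddCommGroup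
  have hn : ∀ x : V, ‖x‖ = q x := fun _ => rfl
  let _ : NormedSpace ℝ V := ⟨fun r x => (map_smul_eq_mul q r x).le⟩
  let π : V →ₗ[ℝ] SeparationQuotient V := (SeparationQuotient.mkCLM ℝ V).toLinearMap
  have hπ : ∀ x, ‖π x‖ = q x := fun x => SeparationQuotient.norm_mk x
  have hsurj : Function.Surjective π := SeparationQuotient.surjective_mk
  have : FiniteDimensional ℝ (SeparationQuotient V) := Module.Finite.of_surjective π hsurj
  -- `f` factors through the image of `S` in the quotient
  let g : S →ₗ[ℝ] S.map π := π.submoduleMap S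
  have hg : Function.Surjective g := π.submoduleMap_surjective S
  have hker : LinearMap.ker g ≤ LinearMap.ker f := by
    intro x hx
    have h1 : π x = 0 := congrArg Subtype.val (LinearMap.mem_ker.1 hx)
    rw [LinearMap.mem_ker, ← norm_eq_zero, hf, ← hπ, h1, norm_zero]
  have hex : ∃ ψ : S.map π →ₗ[ℝ] G, ∀ x, ψ (g x) = f x := by
    refine ⟨((LinearMap.ker g).liftQ f hker) ∘ₗ
      (g.quotKerEquivOfSurjective hg).symm.toLinearMap, fun x => ?_⟩
    have : (g.quotKerEquivOfSurjective hg).symm (g x) = (LinearMap.ker g).mkQ x := by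
      rw [LinearEquiv.symm_apply_eq]; rfl
    rw [LinearMap.comp_apply, LinearEquiv.coe_coe, this]
    simp
  obtain ⟨ψ, hψ⟩ := hex
  obtain ⟨φ, hφ1, hφ2⟩ := hG ε hε (SeparationQuotient V) inferInstance inferInstance inferInstance
    (S.map π) ⟨ψ, fun x => by
      obtain ⟨y, rfl⟩ := hg x
      rw [hψ, hf, ← hπ]; rfl⟩
  refine ⟨φ ∘ₗ π, fun x => ?_, fun x => ?_⟩
  · have := hφ1 (g x)
    exact this.trans (hψ x)
  · have := hφ2 (π x)
    rw [hπ] at this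
    rw [LinearMap.comp_apply, abs_le]
    constructor <;> linarith

/-- The Gurarij property is applied to the span of the indices involved, with a relative error small
enough that it is absorbed in the `ℓ¹` norm. -/
theorem extExact_of_gurarij {G : Type*} [NormedAddCommGroup G] [NormedSpace ℝ G]
    (hG : GurarijProperty G) : ExtExact G := by
  intro J _ s j a q hj h δ hδ
  obtain ⟨M, hM0, hM⟩ := exists_seminorm_le_l1 q (insert j s)
  let V := supported ℝ ℝ ((insert j s : Finset J) : Set J)
  have : FiniteDimensional ℝ V :=
    Module.Finite.equiv (supportedEquivFinsupp ((insert j s : Finset J) : Set J)).symm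
  let S : Submodule ℝ V := (supported ℝ ℝ (s : Set J)).comap V.subtype
  let qV : Seminorm ℝ V := q.comp V.subtype
  obtain ⟨φ, hφ1, hφ2⟩ := gurarij_seminorm hG V qV S
    ((linearCombination ℝ a) ∘ₗ V.subtype ∘ₗ S.subtype) (fun x => h _ x.2) (δ / (M + 1))
    (by positivity)
  have hmem : ∀ i ∈ insert j s, single i (1 : ℝ) ∈ V := fun i hi => single_mem_supported ℝ 1 hi
  let a' : J → G := fun i => if hi : i ∈ insert j s then φ ⟨_, hmem i hi⟩ else 0
  have ha' : ∀ i (hi : i ∈ insert j s), a' i = φ ⟨_, hmem i hi⟩ := fun i hi => dif_pos hi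
  refine ⟨a', fun i hi => ?_, fun c hc => ?_⟩
  · rw [ha' i (Finset.mem_insert_of_mem hi)]
    have h1 := hφ1 ⟨⟨_, hmem i (Finset.mem_insert_of_mem hi)⟩, single_mem_supported ℝ 1 hi⟩
    rw [h1]
    simp
  · have h1 : linearCombination ℝ a' c = φ ⟨c, hc⟩ := by
      have h2 : (⟨c, hc⟩ : V) = ∑ i ∈ c.support.attach,
          c i • (⟨_, hmem i (hc i.2)⟩ : V) := by
        apply Subtype.ext
        rw [AddSubmonoidClass.coe_finsetSum]
        simp only [SetLike.mk_smul_mk, smul_single, smul_eq_mul, mul_one]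
        rw [Finset.sum_attach c.support (fun i => single i (c i))]
        exact (Finsupp.sum_single c).symm
      rw [h2, map_sum, linearCombination_apply, Finsupp.sum, ← Finset.sum_attach]
      refine Finset.sum_congr rfl fun i _ => ?_
      rw [map_smul, ha' i (hc i.2)]
    have h2 := hφ2 ⟨c, hc⟩
    rw [tupNorm_apply, h1]
    refine h2.trans ?_
    change δ / (M + 1) * q c ≤ δ * l1 c
    rw [div_mul_eq_mul_div, div_le_iff₀ (by positivity), mul_assoc]
    refine mul_le_mul_of_nonneg_left ((hM c hc).trans ?_) hδ.le
    have := apply_nonneg l1 c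
    linarith

/-! ### The one-step equivariant extension -/

theorem l1_erase_le (c : J →₀ ℝ) (j : J) : l1 (c.erase j) ≤ l1 c := by
  classical
  rw [l1_apply, l1_apply, support_erase]
  refine (Finset.sum_le_sum_of_subset_of_nonneg (Finset.erase_subset j _)
    fun _ _ _ => abs_nonneg _).trans (Finset.sum_le_sum fun i _ => ?_)
  by_cases h : i = j
  · rw [h, erase_same, abs_zero]; exact abs_nonneg _
  · rw [erase_ne h]

/-- Hahn–Banach: every vector has a norming functional for a given seminorm. -/
theorem exists_dual_le_seminorm {V : Type*} [AddCommGroup V] [Module ℝ V] (N : Seminorm ℝ V)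
    (v : V) : ∃ g : V →ₗ[ℝ] ℝ, (∀ x, g x ≤ N x) ∧ g v = N v := by
  by_cases hv : v = 0
  · exact ⟨0, fun x => apply_nonneg N x, by simp [hv]⟩
  obtain ⟨g, hg1, hg2⟩ := exists_extension_of_le_sublinear
    (LinearPMap.mkSpanSingleton v (N v) hv) N
    (fun c hc x => by rw [map_smul_eq_mul, Real.norm_of_nonneg hc.le])
    (fun x y => map_add_le_add N x y) (by
      rintro ⟨x, hx⟩
      obtain ⟨t, rfl⟩ := Submodule.mem_span_singleton.1 hx
      change _ ≤ N (t • v)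
      rw [LinearPMap.mkSpanSingleton'_apply]
      rw [map_smul_eq_mul, smul_eq_mul]
      exact mul_le_mul_of_nonneg_right (Real.le_norm_self t) (apply_nonneg N v))
  refine ⟨g, hg2, ?_⟩
  have := hg1 ⟨v, Submodule.mem_span_singleton_self v⟩
  rw [this, LinearPMap.mkSpanSingleton_apply]

/-- Hahn–Banach in the amalgam of `X` and `(J →₀ ℝ, q)`: if `q` extends the seminorm of the tuple
`a`, then every `c` is normed by a functional `g ≤ q` which along `a` agrees with a functional in
the dual unit ball of `X`. -/
theorem exists_norming_pair {X : Type*} [SeminormedAddCommGroup X] [NormedSpace ℝ X] (a : J → X)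
    (q : Seminorm ℝ (J →₀ ℝ)) (s : Set J) (h : ∀ c ∈ supported ℝ ℝ s, tupNorm a c = q c)
    (c : J →₀ ℝ) :
    ∃ (l : X →L[ℝ] ℝ) (g : (J →₀ ℝ) →ₗ[ℝ] ℝ), ‖l‖ ≤ 1 ∧ (∀ d, g d ≤ q d) ∧ g c = q c ∧
      ∀ w ∈ supported ℝ ℝ s, l (linearCombination ℝ a w) = g w := by
  let S := supported ℝ ℝ s
  let M := (normSeminorm ℝ X).comp (LinearMap.fst ℝ X (J →₀ ℝ)) +
    q.comp (LinearMap.snd ℝ X (J →₀ ℝ))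
  have hM : ∀ x d, M (x, d) = ‖x‖ + q d := fun _ _ => rfl
  let T : S →ₗ[ℝ] X × (J →₀ ℝ) := (linearCombination ℝ a ∘ₗ S.subtype).prod (-S.subtype)
  have hT : ∀ w : S, T w = (linearCombination ℝ a w, -(w : J →₀ ℝ)) := fun _ => rfl
  -- the seminorm of the amalgam, in which `a` is identified with the basis vectors
  let N := infConv (V := X × (J →₀ ℝ)) (W := S) T M 0
  have hNM : ∀ v, N v ≤ M v := fun v => by
    simpa using infConv_le (V := X × (J →₀ ℝ)) (W := S) T M 0 v 0
  have hN : q c ≤ N (0, c) := by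
    refine le_infConv _ _ _ fun w => ?_
    rw [hT, Prod.mk_sub_mk, hM, zero_sub, norm_neg, ← tupNorm_apply, h w w.2, sub_neg_eq_add]
    have := map_sub_le_add q (c + w) w
    rw [add_sub_cancel_right] at this
    change q c ≤ q w + q (c + w) + 0
    linarith
  obtain ⟨f, hf, hfc⟩ := exists_dual_le_seminorm N (0, c)
  have hl : ∀ x : X, ‖f (x, 0)‖ ≤ 1 * ‖x‖ := by
    intro x
    have h1 : ∀ y : X, f (y, 0) ≤ ‖y‖ := fun y => by
      refine (hf _).trans ((hNM _).trans ?_)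
      rw [hM, map_zero, add_zero]
    have h2 := h1 (-x)
    have h3 : f (-x, 0) = -f (x, 0) := by
      rw [← map_neg, Prod.neg_mk, neg_zero]
    rw [h3, norm_neg] at h2
    rw [one_mul, Real.norm_eq_abs, abs_le]
    exact ⟨by linarith, h1 x⟩
  let l : X →L[ℝ] ℝ := (f ∘ₗ LinearMap.inl ℝ X (J →₀ ℝ)).mkContinuous 1 hl
  refine ⟨l, f ∘ₗ LinearMap.inr ℝ X (J →₀ ℝ), LinearMap.mkContinuous_norm_le _ zero_le_one _,
    fun d => ?_, ?_, fun w hw => ?_⟩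
  · refine (hf _).trans ((hNM _).trans ?_)
    change M (0, d) ≤ _
    rw [hM, norm_zero, zero_add]
  · change f (0, c) = q c
    refine le_antisymm ((hf _).trans ((hNM _).trans ?_)) (hN.trans hfc.ge)
    rw [hM, norm_zero, zero_add]
  · change f (linearCombination ℝ a w, 0) = f (0, w)
    have h0 : ∀ w : S, f (T w) ≤ 0 := fun w => by
      have h1 := infConv_le (V := X × (J →₀ ℝ)) (W := S) T M 0 (T w) w
      have h2 : M (T w - T w) = 0 := by rw [sub_self]; exact map_zero M
      have h3 : (0 : Seminorm ℝ S) w = 0 := rfl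
      rw [h2, h3, add_zero] at h1
      exact (hf _).trans h1
    have h1 := h0 ⟨w, hw⟩
    have h2 := h0 ((-1 : ℝ) • ⟨w, hw⟩)
    rw [map_smul, map_smul, smul_eq_mul] at h2
    have h3 : f (T ⟨w, hw⟩) = f (linearCombination ℝ a w, 0) - f (0, w) := by
      rw [← map_sub, hT]; simp
    linarith

section Step

variable (X : Type v) [NormedAddCommGroup X] [NormedSpace ℝ X]

/-- The dual unit ball. -/
abbrev DualBall : Type v := {l : X →L[ℝ] ℝ // ‖l‖ ≤ 1}

/-- Bounded real functions on the dual unit ball, with the supremum norm. -/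
abbrev BallFun : Type v := lp (fun _ : DualBall X => ℝ) ⊤

variable {X}

theorem DualBall.abs_le (l : DualBall X) (x : X) : |l.1 x| ≤ ‖x‖ := by
  have := l.1.le_of_opNorm_le l.2 x
  rwa [one_mul] at this

/-- A bounded function on the dual unit ball, from a pointwise bound. -/
def mkBallFun (f : DualBall X → ℝ) (C : ℝ) (h : ∀ l, |f l| ≤ C) : BallFun X :=
  ⟨f, memℓp_infty ⟨C, by rintro _ ⟨l, rfl⟩; exact h l⟩⟩

theorem BallFun.norm_le {f : BallFun X} {C : ℝ} (hC : 0 ≤ C) (h : ∀ l, |f l| ≤ C) : ‖f‖ ≤ C :=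
  lp.norm_le_of_forall_le hC h

theorem BallFun.abs_le_norm (f : BallFun X) (l : DualBall X) : |f l| ≤ ‖f‖ :=
  lp.norm_apply_le_norm ENNReal.top_ne_zero f l

/-- The canonical isometric embedding of `X` into the bounded functions on its dual ball. -/
noncomputable def evalMap : X →ₗᵢ[ℝ] BallFun X where
  toFun x := mkBallFun (fun l => l.1 x) ‖x‖ fun l => l.abs_le x
  map_add' x y := by ext l; exact map_add l.1 x y
  map_smul' r x := by ext l; exact map_smul l.1 r x
  norm_map' x := by
    refine le_antisymm (BallFun.norm_le (norm_nonneg x) fun l => l.abs_le x) ?_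
    obtain ⟨g, hg, hgx⟩ := exists_dual_vector'' ℝ x
    have := BallFun.abs_le_norm (mkBallFun (fun l => l.1 x) ‖x‖ fun l => l.abs_le x) ⟨g, hg⟩
    change |g x| ≤ _ at this
    rw [hgx] at this
    simpa using this

theorem evalMap_apply (x : X) (l : DualBall X) : evalMap x l = l.1 x := rfl

/-- The maximum of the affine functions `l ↦ l (z i) - r i`. -/
noncomputable def maxFun {n : ℕ} (z : Fin (n + 1) → X) (r : Fin (n + 1) → ℝ) (l : DualBall X) :
    ℝ :=
  Finset.univ.sup' Finset.univ_nonempty fun i => l.1 (z i) - r i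

theorem maxFun_le {n : ℕ} {z : Fin (n + 1) → X} {r : Fin (n + 1) → ℝ} {l : DualBall X} {C : ℝ}
    (h : ∀ i, l.1 (z i) - r i ≤ C) : maxFun z r l ≤ C :=
  Finset.sup'_le _ _ fun i _ => h i

theorem le_maxFun {n : ℕ} (z : Fin (n + 1) → X) (r : Fin (n + 1) → ℝ) (l : DualBall X)
    (i : Fin (n + 1)) : l.1 (z i) - r i ≤ maxFun z r l :=
  Finset.le_sup' (fun i => l.1 (z i) - r i) (Finset.mem_univ i)

theorem maxFun_sub_le {n : ℕ} (z z' : Fin (n + 1) → X) (r r' : Fin (n + 1) → ℝ) (l : DualBall X) :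
    maxFun z r l - maxFun z' r' l ≤ ‖z - z'‖ + ‖r - r'‖ := by
  rw [sub_le_iff_le_add]
  refine maxFun_le fun i => ?_
  have h1 := le_maxFun z' r' l i
  have h2 := (abs_le.1 (l.abs_le (z i - z' i))).2
  have h3 := norm_le_pi_norm (z - z') i
  have h4 := norm_le_pi_norm (r - r') i
  rw [map_sub] at h2
  rw [Pi.sub_apply] at h3 h4
  rw [Real.norm_eq_abs] at h4
  have h5 := (abs_le.1 h4).1
  linarith

theorem abs_maxFun_sub_le {n : ℕ} (z z' : Fin (n + 1) → X) (r r' : Fin (n + 1) → ℝ)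
    (l : DualBall X) : |maxFun z r l - maxFun z' r' l| ≤ ‖z - z'‖ + ‖r - r'‖ := by
  rw [abs_sub_le_iff]
  refine ⟨maxFun_sub_le z z' r r' l, ?_⟩
  rw [norm_sub_rev z, norm_sub_rev r]
  exact maxFun_sub_le z' z r' r l

theorem abs_maxFun_le {n : ℕ} (z : Fin (n + 1) → X) (r : Fin (n + 1) → ℝ)
    (l : DualBall X) : |maxFun z r l| ≤ ‖z‖ + ‖r‖ := by
  have h := abs_maxFun_sub_le z 0 r 0 l
  have h0 : maxFun (0 : Fin (n + 1) → X) 0 l = 0 := by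
    simp [maxFun]
  rwa [h0, sub_zero, sub_zero, sub_zero] at h

/-- The function `maxFun z r` as an element of the space of bounded functions. -/
noncomputable def maxPt {n : ℕ} (z : Fin (n + 1) → X) (r : Fin (n + 1) → ℝ) : BallFun X :=
  mkBallFun (maxFun z r) _ (abs_maxFun_le z r)

theorem maxPt_apply {n : ℕ} (z : Fin (n + 1) → X) (r : Fin (n + 1) → ℝ) (l : DualBall X) :
    maxPt z r l = maxFun z r l := rfl

theorem continuous_maxPt (n : ℕ) :
    Continuous fun p : (Fin (n + 1) → X) × (Fin (n + 1) → ℝ) => maxPt p.1 p.2 := by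
  refine LipschitzWith.continuous (K := 2) (LipschitzWith.of_dist_le_mul fun p p' => ?_)
  rw [dist_eq_norm]
  refine (BallFun.norm_le (by positivity) fun l =>
    abs_maxFun_sub_le p.1 p'.1 p.2 p'.2 l).trans ?_
  have h1 := norm_fst_le (p - p')
  have h2 := norm_snd_le (p - p')
  rw [dist_eq_norm, NNReal.coe_ofNat]
  simp only [Prod.fst_sub, Prod.snd_sub] at h1 h2
  linarith

/-- A finite tuple `a` together with an exact one-point extension `q` of its seminorm is realised
up to `δ` by adjoining the function `l ↦ max_i (l (z i) - q (cᵢ - e_j))`, where `z i = ∑ cᵢ a` runs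
over a fine net in a large ball of the span of `a`. -/
theorem exists_maxPt [DecidableEq J] (s : Finset J) (j : J) (a : J → X)
    (q : Seminorm ℝ (J →₀ ℝ)) (hj : j ∉ s)
    (h : ∀ c ∈ supported ℝ ℝ (s : Set J), tupNorm a c = q c) (δ : ℝ) (hδ : 0 < δ) :
    ∃ (n : ℕ) (z : Fin (n + 1) → X) (r : Fin (n + 1) → ℝ),
      Close (insert j s) δ (tupNorm (Function.update (fun i => evalMap (a i)) j (maxPt z r))) q := by
  let S := supported ℝ ℝ (s : Set J)
  let A : S →ₗ[ℝ] X := linearCombination ℝ a ∘ₗ S.subtype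
  have hAq : ∀ w : S, ‖A w‖ = q w := fun w => h w w.2
  obtain ⟨M, hM0, hM⟩ := exists_seminorm_le_l1 q s
  let Q := q (single j 1)
  have hQ : 0 ≤ Q := apply_nonneg _ _
  let R := 2 * Q * M / δ + 1
  have hR : 0 < R := by positivity
  have hRδ : 2 * Q * M ≤ δ * R := by
    have : δ * (2 * Q * M / δ) = 2 * Q * M := by field_simp
    change _ ≤ δ * (2 * Q * M / δ + 1)
    linarith
  -- a finite `δ / 2`-net in the ball of radius `R` of the span of `a`, starting with `0`
  have hnet : ∃ (n : ℕ) (w : Fin (n + 1) → S), w 0 = 0 ∧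
      ∀ y : S, ‖A y‖ ≤ R → ∃ i, ‖A y - A (w i)‖ ≤ δ / 2 := by
    have : FiniteDimensional ℝ S :=
      Module.Finite.equiv (supportedEquivFinsupp (s : Set J)).symm
    have hc : IsCompact (Metric.closedBall (0 : LinearMap.range A) R) :=
      isCompact_closedBall _ _
    obtain ⟨t, -, htf, htc⟩ := hc.finite_cover_balls (half_pos hδ)
    obtain ⟨n, f, hf⟩ := htf.fin_embedding
    choose w hw using fun i => (f i).2
    refine ⟨n, Fin.cons 0 w, rfl, fun y hy => ?_⟩
    have hy' : (⟨A y, LinearMap.mem_range_self A y⟩ : LinearMap.range A) ∈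
        Metric.closedBall (0 : LinearMap.range A) R := by
      rw [mem_closedBall_zero_iff]; exact hy
    obtain ⟨x, hx, hyx⟩ := Set.mem_iUnion₂.1 (htc hy')
    rw [← hf] at hx
    obtain ⟨i, rfl⟩ := hx
    refine ⟨i.succ, ?_⟩
    rw [Fin.cons_succ, hw, ← dist_eq_norm]
    exact (Metric.mem_ball.1 hyx).le
  obtain ⟨n, w, hw0, hw⟩ := hnet
  let z : Fin (n + 1) → X := fun i => A (w i)
  let r : Fin (n + 1) → ℝ := fun i => q ((w i : J →₀ ℝ) - single j 1)
  have hr0 : r 0 = Q := by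
    change q ((w 0 : J →₀ ℝ) - single j 1) = Q
    rw [hw0, ZeroMemClass.coe_zero, zero_sub, map_neg_eq_map]
  have hz0 : z 0 = 0 := by
    change A (w 0) = 0
    rw [hw0, map_zero]
  have hqA : ∀ u v : S, q ((u : J →₀ ℝ) - v) = ‖A u - A v‖ := fun u v => by
    rw [← map_sub, hAq]; rfl
  -- the distance from the new function to `A y` is at most `q (y - e_j)` on one side
  have hupper : ∀ (l : DualBall X) (y : S), maxFun z r l - l.1 (A y) ≤ q ((y : J →₀ ℝ) - single j 1) := by
    intro l y
    rw [sub_le_iff_le_add]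
    refine maxFun_le fun i => ?_
    have h1 := (abs_le.1 (l.abs_le (A (w i) - A y))).2
    have h2 := map_add_le_add q ((w i : J →₀ ℝ) - single j 1) (single j 1 - (y : J →₀ ℝ))
    rw [sub_add_sub_cancel, hqA, map_sub_rev q (single j 1)] at h2
    rw [map_sub] at h1
    change l.1 (A (w i)) - q ((w i : J →₀ ℝ) - single j 1) ≤ _
    linarith
  have hlower : ∀ (l : DualBall X) (y : S), ‖A y‖ ≤ R →
      l.1 (A y) - maxFun z r l ≤ q ((y : J →₀ ℝ) - single j 1) + δ := by
    intro l y hy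
    obtain ⟨i, hi⟩ := hw y hy
    have h0 := le_maxFun z r l i
    have h1 := (abs_le.1 (l.abs_le (A y - A (w i)))).2
    have h2 := map_add_le_add q ((w i : J →₀ ℝ) - y) ((y : J →₀ ℝ) - single j 1)
    rw [sub_add_sub_cancel, hqA, norm_sub_rev] at h2
    rw [map_sub] at h1
    change l.1 (A (w i)) - q ((w i : J →₀ ℝ) - single j 1) ≤ _ at h0
    linarith
  have habs : ∀ l : DualBall X, |maxFun z r l| ≤ Q := by
    intro l
    rw [abs_le]
    constructor
    · have := le_maxFun z r l 0
      rw [hz0, hr0, map_zero] at this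
      linarith
    · have := hupper l 0
      rw [map_zero, map_zero, sub_zero, ZeroMemClass.coe_zero, zero_sub, map_neg_eq_map] at this
      exact this
  refine ⟨n, z, r, fun c hc => ?_⟩
  -- split off the coordinate `j`
  obtain ⟨w', t, rfl⟩ : ∃ (w' : S) (t : ℝ), c = w' + single j t := by
    refine ⟨⟨c.erase j, ?_⟩, c j, (c.erase_add_single j).symm⟩
    rw [mem_supported, support_erase]
    intro i hi
    have hi' := (mem_supported ℝ c).1 hc (Finset.mem_of_mem_erase hi)
    exact (Finset.mem_insert.1 hi').resolve_left (Finset.ne_of_mem_erase hi)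
  have hjw : (w' : J →₀ ℝ) j = 0 := by
    by_contra hne
    exact hj ((mem_supported ℝ _).1 w'.2 (Finsupp.mem_support_iff.2 hne))
  have ht : |t| ≤ l1 ((w' : J →₀ ℝ) + single j t) := by
    have := abs_le_l1 ((w' : J →₀ ℝ) + single j t) j
    rwa [Finsupp.add_apply, hjw, zero_add, single_eq_same] at this
  have hwl : l1 (w' : J →₀ ℝ) ≤ l1 ((w' : J →₀ ℝ) + single j t) := by
    have := l1_erase_le ((w' : J →₀ ℝ) + single j t) j
    rwa [erase_add, erase_single, add_zero, erase_of_notMem_support] at this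
    rwa [Finsupp.notMem_support_iff]
  have hqt : q (single j t) = |t| * Q := by
    have : single j t = t • single j (1 : ℝ) := by simp
    rw [this, map_smul_eq_mul, Real.norm_eq_abs]
  have hval : tupNorm (Function.update (fun i => evalMap (a i)) j (maxPt z r))
      ((w' : J →₀ ℝ) + single j t) = ‖evalMap (A w') + t • maxPt z r‖ := by
    rw [tupNorm_apply, map_add, linearCombination_single, Function.update_self]
    congr 2
    rw [linearCombination_congr (b := fun i => evalMap (a i)) (s := (s : Set J))
      (fun i hi => Function.update_of_ne (by rintro rfl; exact hj hi) _ _) w'.2]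
    simp [A, linearCombination_apply, Finsupp.sum]
  have hpt : ∀ l : DualBall X, (evalMap (A w') + t • maxPt z r : BallFun X) l =
      l.1 (A w') + t * maxFun z r l := fun l => rfl
  have hl1 := apply_nonneg l1 ((w' : J →₀ ℝ) + single j t)
  rw [hval, abs_sub_le_iff]
  constructor
  · rw [sub_le_iff_le_add']
    refine BallFun.norm_le (by positivity) fun l => ?_
    rw [hpt]
    by_cases hR' : ‖A w'‖ ≤ R * |t|
    · by_cases ht0 : t = 0
      · subst ht0
        rw [zero_mul, add_zero, single_zero, add_zero]
        rw [single_zero, add_zero] at hl1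
        have h1 := l.abs_le (A w')
        rw [hAq] at h1
        have := mul_nonneg hδ.le hl1
        linarith
      -- `t • (y - e_j) = -(w' + t • e_j)` for `y = -t⁻¹ • w'`
      have hy : A w' = -(t • A ((-t⁻¹) • w')) := by
        rw [map_smul, smul_smul, mul_neg, mul_inv_cancel₀ ht0, neg_smul, one_smul, neg_neg]
      have hyR : ‖A ((-t⁻¹) • w')‖ ≤ R := by
        rw [map_smul, norm_smul, norm_neg, norm_inv, Real.norm_eq_abs,
          inv_mul_le_iff₀ (abs_pos.2 ht0), mul_comm]
        exact hR'
      have hqy : |t| * q ((((-t⁻¹) • w' : S) : J →₀ ℝ) - single j 1) =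
          q ((w' : J →₀ ℝ) + single j t) := by
        rw [← Real.norm_eq_abs, ← map_smul_eq_mul, ← map_neg_eq_map q]
        congr 1
        have : single j t = t • single j (1 : ℝ) := by simp
        rw [this]
        push_cast
        rw [smul_sub, smul_smul, mul_neg, mul_inv_cancel₀ ht0, neg_smul, one_smul]
        abel
      have h1 := hupper l ((-t⁻¹) • w')
      have h2 := hlower l _ hyR
      have h3 : |maxFun z r l - l.1 (A ((-t⁻¹) • w'))| ≤
          q ((((-t⁻¹) • w' : S) : J →₀ ℝ) - single j 1) + δ := by
        rw [abs_sub_le_iff]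
        exact ⟨by linarith, h2⟩
      have h4 : l.1 (A w') + t * maxFun z r l =
          t * (maxFun z r l - l.1 (A ((-t⁻¹) • w'))) := by
        rw [hy, map_neg, map_smul, smul_eq_mul]
        ring
      rw [h4, abs_mul]
      refine (mul_le_mul_of_nonneg_left h3 (abs_nonneg t)).trans ?_
      rw [mul_add, hqy]
      have := mul_le_mul_of_nonneg_left ht hδ.le
      linarith
    · -- for large `A w'` the contribution `2 |t| Q` of the new function is within the error
      rw [not_le] at hR'
      have h1 := abs_add_le (l.1 (A w')) (t * maxFun z r l)
      have h2 := l.abs_le (A w')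
      have h3 := mul_le_mul_of_nonneg_left (habs l) (abs_nonneg t)
      rw [← abs_mul] at h3
      have h4 := map_sub_le_add q ((w' : J →₀ ℝ) + single j t) (single j t)
      rw [add_sub_cancel_right, hqt] at h4
      rw [hAq] at h2 hR'
      have h5 := hM _ w'.2
      have h6 := mul_le_mul_of_nonneg_left hwl hM0
      have h7 : 2 * Q * (R * |t|) ≤ 2 * Q * (M * l1 ((w' : J →₀ ℝ) + single j t)) :=
        mul_le_mul_of_nonneg_left (by linarith) (by positivity)
      have h8 := mul_le_mul_of_nonneg_right hRδ hl1
      have h9 : R * (2 * Q * |t|) ≤ R * (δ * l1 ((w' : J →₀ ℝ) + single j t)) := by linarith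
      have h10 := le_of_mul_le_mul_left h9 hR
      linarith
  · -- the norming functional takes a value at `e_j` that lies between those of the new function
    -- at `l` and (up to sign) at `-l`
    obtain ⟨l, g, hl, hg, hgc, hlg⟩ := exists_norming_pair a q s h ((w' : J →₀ ℝ) + single j t)
    have h1 : maxFun z r ⟨l, hl⟩ ≤ g (single j 1) := by
      refine maxFun_le fun i => ?_
      have h2 := hg ((w i : J →₀ ℝ) - single j 1)
      have h3 : l (A (w i)) = g (w i) := hlg _ (w i).2
      change l (A (w i)) - q ((w i : J →₀ ℝ) - single j 1) ≤ _
      rw [map_sub] at h2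
      linarith
    have hl' : ‖-l‖ ≤ 1 := by rwa [norm_neg]
    have h2 : maxFun z r ⟨-l, hl'⟩ ≤ -g (single j 1) := by
      refine maxFun_le fun i => ?_
      have h2 := hg (single j 1 - (w i : J →₀ ℝ))
      have h3 : l (A (w i)) = g (w i) := hlg _ (w i).2
      change -l (A (w i)) - q ((w i : J →₀ ℝ) - single j 1) ≤ _
      rw [map_sub_rev q]
      rw [map_sub] at h2
      linarith
    have h3 : q ((w' : J →₀ ℝ) + single j t) = l (A w') + t * g (single j 1) := by
      have h4 : l (A w') = g w' := hlg _ w'.2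
      have : single j t = t • single j (1 : ℝ) := by simp
      rw [← hgc, map_add, h4, this, map_smul, smul_eq_mul]
    suffices hs : q ((w' : J →₀ ℝ) + single j t) ≤ ‖evalMap (A w') + t • maxPt z r‖ by
      have := mul_nonneg hδ.le hl1
      linarith
    rw [h3]
    rcases le_total 0 t with ht0 | ht0
    · have h4 := BallFun.abs_le_norm (evalMap (A w') + t • maxPt z r) ⟨-l, hl'⟩
      rw [hpt] at h4
      have h5 := (abs_le.1 h4).1
      have h6 := mul_le_mul_of_nonneg_left h2 ht0
      have h7 : (⟨-l, hl'⟩ : DualBall X).1 (A w') = -l (A w') := rfl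
      linarith
    · have h4 := BallFun.abs_le_norm (evalMap (A w') + t • maxPt z r) ⟨l, hl⟩
      rw [hpt] at h4
      have h5 := (abs_le.1 h4).2
      have h6 := mul_le_mul_of_nonpos_left h1 ht0
      have h7 : (⟨l, hl⟩ : DualBall X).1 (A w') = l (A w') := rfl
      linarith

/-- Precomposition of a functional in the dual ball with a linear isometry. -/
def DualBall.comp (l : DualBall X) (f : X →ₗᵢ[ℝ] X) : DualBall X :=
  ⟨l.1.comp f.toContinuousLinearMap, ContinuousLinearMap.opNorm_le_bound _ zero_le_one fun x => by
    have := l.abs_le (f x)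
    rw [f.norm_map] at this
    rw [one_mul]
    exact this⟩

theorem DualBall.comp_apply (l : DualBall X) (f : X →ₗᵢ[ℝ] X) (x : X) :
    (l.comp f).1 x = l.1 (f x) := rfl

/-- The linear map on bounded functions induced by a linear isometry `f` through `l ↦ l ∘ f`. -/
noncomputable def pull (f : X →ₗᵢ[ℝ] X) : BallFun X →ₗ[ℝ] BallFun X where
  toFun F := mkBallFun (fun l => F (l.comp f)) ‖F‖ fun l => F.abs_le_norm _
  map_add' F F' := by ext l; rfl
  map_smul' r F := by ext l; rfl

theorem pull_apply (f : X →ₗᵢ[ℝ] X) (F : BallFun X) (l : DualBall X) :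
    pull f F l = F (l.comp f) := rfl

theorem norm_pull_le (f : X →ₗᵢ[ℝ] X) (F : BallFun X) : ‖pull f F‖ ≤ ‖F‖ :=
  BallFun.norm_le (norm_nonneg _) fun l => F.abs_le_norm (l.comp f)

theorem pull_evalMap (f : X →ₗᵢ[ℝ] X) (x : X) : pull f (evalMap x) = evalMap (f x) := by
  ext l; rfl

theorem pull_maxPt (f : X →ₗᵢ[ℝ] X) {n : ℕ} (z : Fin (n + 1) → X) (r : Fin (n + 1) → ℝ) :
    pull f (maxPt z r) = maxPt (fun i => f (z i)) r := by
  ext l; rfl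

variable (X) in
/-- The space of functions on the dual ball generated by `X` and all the functions `maxPt z r`. -/
noncomputable def stepSpace : Submodule ℝ (BallFun X) :=
  Submodule.span ℝ (Set.range (evalMap (X := X)) ∪
    ⋃ n : ℕ, Set.range fun p : (Fin (n + 1) → X) × (Fin (n + 1) → ℝ) => maxPt p.1 p.2)

theorem evalMap_mem_stepSpace (x : X) : evalMap x ∈ stepSpace X :=
  Submodule.subset_span (Or.inl ⟨x, rfl⟩)

theorem maxPt_mem_stepSpace {n : ℕ} (z : Fin (n + 1) → X) (r : Fin (n + 1) → ℝ) :
    maxPt z r ∈ stepSpace X :=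
  Submodule.subset_span (Or.inr (Set.mem_iUnion.2 ⟨n, (z, r), rfl⟩))

theorem separableSpace_stepSpace [TopologicalSpace.SeparableSpace X] :
    TopologicalSpace.SeparableSpace (stepSpace X) := by
  refine TopologicalSpace.IsSeparable.separableSpace (TopologicalSpace.IsSeparable.span ?_)
  refine (TopologicalSpace.isSeparable_range evalMap.continuous).union
    (TopologicalSpace.IsSeparable.iUnion fun n => ?_)
  exact TopologicalSpace.isSeparable_range (continuous_maxPt n)

theorem pull_mem_stepSpace (f : X →ₗᵢ[ℝ] X) {F : BallFun X} (hF : F ∈ stepSpace X) :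
    pull f F ∈ stepSpace X := by
  induction hF using Submodule.span_induction with
  | mem F hF =>
    rcases hF with ⟨x, rfl⟩ | hF
    · rw [pull_evalMap]; exact evalMap_mem_stepSpace _
    · obtain ⟨n, ⟨z, r⟩, rfl⟩ := Set.mem_iUnion.1 hF
      rw [pull_maxPt]; exact maxPt_mem_stepSpace _ _
  | zero => rw [map_zero]; exact Submodule.zero_mem _
  | add F F' _ _ h h' => rw [map_add]; exact Submodule.add_mem _ h h'
  | smul r F _ h => rw [map_smul]; exact Submodule.smul_mem _ _ h

theorem continuous_pull_of_mem_stepSpace {Γ : Type*} [TopologicalSpace Γ] (f : Γ → X →ₗᵢ[ℝ] X)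
    (hf : ∀ x, Continuous fun γ => f γ x) {F : BallFun X} (hF : F ∈ stepSpace X) :
    Continuous fun γ => pull (f γ) F := by
  induction hF using Submodule.span_induction with
  | mem F hF =>
    rcases hF with ⟨x, rfl⟩ | hF
    · simp only [pull_evalMap]
      exact evalMap.continuous.comp (hf x)
    · obtain ⟨n, ⟨z, r⟩, rfl⟩ := Set.mem_iUnion.1 hF
      simp only [pull_maxPt]
      exact (continuous_maxPt n).comp
        ((continuous_pi fun i => hf (z i)).prodMk continuous_const)
  | zero => simp only [map_zero]; exact continuous_const
  | add F F' _ _ h h' => simp only [map_add]; exact h.add h'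
  | smul r F _ h => simp only [map_smul]; exact h.const_smul r

/-- A group action by linear isometries extends to the step space. -/
noncomputable def stepAction {Γ : Type*} [Group Γ] (ρ : Γ →* (X →ₗᵢ[ℝ] X)) :
    Γ →* (stepSpace X →ₗᵢ[ℝ] stepSpace X) :=
  have hmul : ∀ γ γ' F, pull (ρ (γ * γ')) F = pull (ρ γ) (pull (ρ γ') F) := fun γ γ' F => by
    rw [map_mul]; rfl
  have hone : ∀ F, pull (ρ 1) F = F := fun F => by
    rw [map_one]; rfl
  { toFun := fun γ =>
      { (pull (ρ γ)).restrict (p := stepSpace X) (q := stepSpace X)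
          (fun _ hF => pull_mem_stepSpace (ρ γ) hF) with
        norm_map' := fun F => by
          refine le_antisymm (norm_pull_le (ρ γ) F) ?_
          have h := norm_pull_le (ρ γ⁻¹) (pull (ρ γ) F)
          rwa [← hmul, inv_mul_cancel, hone] at h }
    map_one' := LinearIsometry.ext fun F => Subtype.ext (hone F)
    map_mul' := fun γ γ' => LinearIsometry.ext fun F => Subtype.ext (hmul γ γ' F) }

end Step

/-- A separable normed space with an action of `Γ` by linear isometries whose orbit maps are
continuous. -/
structure GSpace (Γ : Type*) [Group Γ] [TopologicalSpace Γ] where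
  /-- The underlying type. -/
  carrier : Type v
  [normed : NormedAddCommGroup carrier]
  [space : NormedSpace ℝ carrier]
  sep : TopologicalSpace.SeparableSpace carrier
  /-- The action. -/
  act : Γ →* (carrier →ₗᵢ[ℝ] carrier)
  cont : ∀ x, Continuous fun γ => act γ x

attribute [instance] GSpace.normed GSpace.space

/-- All one-point extensions of finite tuples of `X` are almost realised in `Y` along `ι`. -/
def OnePoint {X Y : Type*} [SeminormedAddCommGroup X] [NormedSpace ℝ X]
    [SeminormedAddCommGroup Y] [NormedSpace ℝ Y] (ι : X →ₗᵢ[ℝ] Y) : Prop :=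
  ∀ (J : Type) [DecidableEq J] (s : Finset J) (j : J) (a : J → X) (q : Seminorm ℝ (J →₀ ℝ)),
    j ∉ s → (∀ c ∈ supported ℝ ℝ (s : Set J), tupNorm a c = q c) → ∀ δ : ℝ, 0 < δ →
      ∃ p : Y, Close (insert j s) δ (tupNorm (Function.update (fun i => ι (a i)) j p)) q

/-- One step of the tower: an equivariant embedding along which all one-point extensions are almost
realised. -/
theorem GSpace.exists_step {Γ : Type*} [Group Γ] [TopologicalSpace Γ] (A : GSpace.{v} Γ) :
    ∃ (B : GSpace.{v} Γ) (ι : A.carrier →ₗᵢ[ℝ] B.carrier),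
      (∀ γ x, ι (A.act γ x) = B.act γ (ι x)) ∧ OnePoint ι := by
  have := A.sep
  let B : GSpace.{v} Γ :=
    { carrier := stepSpace A.carrier
      sep := separableSpace_stepSpace
      act := stepAction A.act
      cont := fun F => Continuous.subtype_mk
        (continuous_pull_of_mem_stepSpace (fun γ => A.act γ) A.cont F.2) _ }
  let ι : A.carrier →ₗᵢ[ℝ] stepSpace A.carrier :=
    { evalMap.toLinearMap.codRestrict (stepSpace A.carrier) evalMap_mem_stepSpace with
      norm_map' := fun x => evalMap.norm_map x }
  refine ⟨B, ι, fun γ x => Subtype.ext (pull_evalMap _ _).symm, ?_⟩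
  intro J _ s j a q hj h δ hδ
  obtain ⟨n, z, r, hzr⟩ := exists_maxPt s j a q hj h δ hδ
  refine ⟨⟨maxPt z r, maxPt_mem_stepSpace z r⟩, ?_⟩
  change Close _ _ (tupNorm (X := stepSpace A.carrier) _) q
  rw [← tupNorm_comp_isometry (stepSpace A.carrier).subtypeₗᵢ]
  convert hzr using 2
  funext i
  by_cases hi : i = j
  · subst hi; simp
  · rw [Function.update_of_ne hi, Function.update_of_ne hi]; rfl

/-! ### The limit of a tower of isometric embeddings -/

section Limit

variable (X : ℕ → Type v) [∀ n, NormedAddCommGroup (X n)] [∀ n, NormedSpace ℝ (X n)]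
  (ι : ∀ n, X n →ₗᵢ[ℝ] X (n + 1))

/-- From the index `N` on, the sequence `x` follows the embeddings `ι`. -/
def CoherentFrom (x : ∀ n, X n) (N : ℕ) : Prop :=
  ∀ n, N ≤ n → x (n + 1) = ι n (x n)

variable {X ι} in
theorem CoherentFrom.mono {x : ∀ n, X n} {N N' : ℕ} (h : CoherentFrom X ι x N) (hN : N ≤ N') :
    CoherentFrom X ι x N' := fun n hn => h n (hN.trans hn)

/-- The space of eventually coherent sequences. Together with the seminorm below this is the direct
limit of the tower, up to null vectors. -/
def limSubmodule : Submodule ℝ (∀ n, X n) where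
  carrier := {x | ∃ N, CoherentFrom X ι x N}
  zero_mem' := ⟨0, fun n _ => (map_zero (ι n)).symm⟩
  add_mem' := by
    rintro x y ⟨N, hN⟩ ⟨N', hN'⟩
    refine ⟨max N N', fun n hn => ?_⟩
    rw [Pi.add_apply, Pi.add_apply, map_add, hN n (le_of_max_le_left hn),
      hN' n (le_of_max_le_right hn)]
  smul_mem' := by
    rintro r x ⟨N, hN⟩
    refine ⟨N, fun n hn => ?_⟩
    rw [Pi.smul_apply, Pi.smul_apply, map_smul, hN n hn]

/-- The limit of the tower, as a type of its own so that it does not carry the product topology. -/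
def Lim : Type v := limSubmodule X ι

namespace Lim

noncomputable instance : AddCommGroup (Lim X ι) := inferInstanceAs (AddCommGroup (limSubmodule X ι))

noncomputable instance : Module ℝ (Lim X ι) := inferInstanceAs (Module ℝ (limSubmodule X ι))

variable {X ι}

/-- The `n`-th coordinate. -/
noncomputable def coord (n : ℕ) : Lim X ι →ₗ[ℝ] X n := LinearMap.proj n ∘ₗ (limSubmodule X ι).subtype

/-- The element given by an eventually coherent sequence. -/
noncomputable def mk (x : ∀ n, X n) (N : ℕ) (h : CoherentFrom X ι x N) : Lim X ι :=
  (⟨x, N, h⟩ : limSubmodule X ι)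

@[simp] theorem coord_mk (x : ∀ n, X n) (N : ℕ) (h : CoherentFrom X ι x N) (n : ℕ) :
    coord n (mk x N h) = x n := rfl

theorem ext {u u' : Lim X ι} (h : ∀ n, coord n u = coord n u') : u = u' :=
  Subtype.ext (funext h)

/-- The element `u` is coherent from the index `N` on. -/
def From (u : Lim X ι) (N : ℕ) : Prop := CoherentFrom X ι (fun n => coord n u) N

theorem From.mono {u : Lim X ι} {N N' : ℕ} (h : From u N) (hN : N ≤ N') : From u N' :=
  CoherentFrom.mono h hN

theorem exists_from (u : Lim X ι) : ∃ N, From u N := u.2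

theorem exists_from_finset (a : J → Lim X ι) (s : Finset J) : ∃ N, ∀ i ∈ s, From (a i) N := by
  choose N hN using fun i => exists_from (a i)
  exact ⟨s.sup N, fun i hi => (hN i).mono (Finset.le_sup hi)⟩

theorem From.add {u u' : Lim X ι} {N : ℕ} (h : From u N) (h' : From u' N) : From (u + u') N :=
  fun n hn => by
    have h1 := h n hn
    have h2 := h' n hn
    simp only at h1 h2
    simp only [map_add, h1, h2]

theorem From.smul {u : Lim X ι} {N : ℕ} (h : From u N) (r : ℝ) : From (r • u) N :=
  fun n hn => by
    have h1 := h n hn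
    simp only at h1
    simp only [map_smul, h1]

theorem From.norm_coord {u : Lim X ι} {N : ℕ} (h : From u N) {n : ℕ} (hn : N ≤ n) :
    ‖coord n u‖ = ‖coord N u‖ := by
  induction n, hn using Nat.le_induction with
  | base => rfl
  | succ n hn ih => rw [← ih, ← (ι n).norm_map, ← h n hn]

/-- The eventual norm of the coordinates. -/
noncomputable def eventualNorm (u : Lim X ι) : ℝ := ‖coord (exists_from u).choose u‖

theorem From.eventualNorm_eq {u : Lim X ι} {N : ℕ} (h : From u N) :
    eventualNorm u = ‖coord N u‖ := by
  have h' := (exists_from u).choose_spec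
  rw [eventualNorm, ← h'.norm_coord (le_max_left _ N), ← h.norm_coord (le_max_right _ _)]

/-- The seminorm of the limit. -/
noncomputable def limSeminorm : Seminorm ℝ (Lim X ι) :=
  Seminorm.of eventualNorm
    (fun u u' => by
      obtain ⟨N, hN⟩ := exists_from u
      obtain ⟨N', hN'⟩ := exists_from u'
      replace hN := hN.mono (le_max_left N N')
      replace hN' := hN'.mono (le_max_right N N')
      rw [hN.eventualNorm_eq, hN'.eventualNorm_eq, (hN.add hN').eventualNorm_eq, map_add]
      exact norm_add_le _ _)
    (fun r u => by
      obtain ⟨N, hN⟩ := exists_from u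
      rw [hN.eventualNorm_eq, (hN.smul r).eventualNorm_eq, map_smul, norm_smul])

noncomputable instance : SeminormedAddCommGroup (Lim X ι) :=
  limSeminorm.toAddGroupSeminorm.toSeminormedAddCommGroup

noncomputable instance : NormedSpace ℝ (Lim X ι) where
  norm_smul_le r u := (map_smul_eq_mul limSeminorm r u).le

theorem From.norm_eq {u : Lim X ι} {N : ℕ} (h : From u N) : ‖u‖ = ‖coord N u‖ :=
  h.eventualNorm_eq

/-- Every vector of a stage of the tower represents an element of the limit. -/
theorem exists_lift (N : ℕ) (x : X N) : ∃ u : Lim X ι, From u N ∧ coord N u = x := by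
  let y : ∀ n, X n := fun n =>
    if h : N ≤ n then Nat.leRecOn (C := X) h (fun {k} => ι k) x else 0
  have hy : CoherentFrom X ι y N := fun n hn => by
    simp only [y, dif_pos hn, dif_pos (hn.trans n.le_succ)]
    exact Nat.leRecOn_succ hn x
  refine ⟨mk y N hy, hy, ?_⟩
  simp only [coord_mk, y, dif_pos le_rfl]
  exact Nat.leRecOn_self x

theorem norm_sub_of_from {u u' : Lim X ι} {N : ℕ} (h : From u N) (h' : From u' N) :
    ‖u - u'‖ = ‖coord N u - coord N u'‖ := by
  have : From (u - u') N := by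
    have := h.add (h'.smul (-1))
    rwa [neg_one_smul, ← sub_eq_add_neg] at this
  rw [this.norm_eq, map_sub]

theorem From.linearCombination {a : J → Lim X ι} {s : Set J} {N : ℕ} (h : ∀ i ∈ s, From (a i) N)
    {c : J →₀ ℝ} (hc : c ∈ supported ℝ ℝ s) : From (linearCombination ℝ a c) N := by
  intro n hn
  simp only [linearCombination_apply, Finsupp.sum, map_sum, map_smul]
  refine Finset.sum_congr rfl fun i hi => ?_
  rw [← h i ((mem_supported ℝ c).1 hc hi) n hn]

theorem tupNorm_eq_of_from {a : J → Lim X ι} {s : Set J} {N : ℕ} (h : ∀ i ∈ s, From (a i) N)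
    {c : J →₀ ℝ} (hc : c ∈ supported ℝ ℝ s) :
    tupNorm a c = tupNorm (fun i => coord N (a i)) c := by
  rw [tupNorm_apply, (From.linearCombination h hc).norm_eq, tupNorm_apply]
  simp [linearCombination_apply, Finsupp.sum]

theorem separableSpace [∀ n, TopologicalSpace.SeparableSpace (X n)] :
    TopologicalSpace.SeparableSpace (Lim X ι) := by
  choose lift hlift hcoord using fun N (x : X N) => exists_lift (ι := ι) N x
  refine ⟨⋃ n, Set.range fun k => lift n (TopologicalSpace.denseSeq (X n) k),
    Set.countable_iUnion fun n => Set.countable_range _, fun u => ?_⟩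
  rw [Metric.mem_closure_iff]
  intro ε hε
  obtain ⟨N, hN⟩ := exists_from u
  obtain ⟨k, hk⟩ := (TopologicalSpace.denseRange_denseSeq (X N)).exists_dist_lt (coord N u) hε
  refine ⟨_, Set.mem_iUnion.2 ⟨N, k, rfl⟩, ?_⟩
  rw [dist_eq_norm, norm_sub_of_from hN (hlift N _), hcoord, ← dist_eq_norm]
  exact hk

/-- A finite tuple of the limit lives in a stage `N`, so its extensions are realised in stage `N + 1`. -/
theorem extExact (h : ∀ n, OnePoint (ι n)) : ExtExact (Lim X ι) := by
  intro J _ s j a q hj hq δ hδ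
  obtain ⟨N, hN⟩ := exists_from_finset a s
  obtain ⟨p, hp⟩ := h N J s j (fun i => coord N (a i)) q hj
    (fun c hc => by rw [← hq c hc, tupNorm_eq_of_from hN hc]) δ hδ
  obtain ⟨u, hu, hup⟩ := exists_lift (ι := ι) (N + 1) p
  refine ⟨Function.update a j u, fun i hi =>
    Function.update_of_ne (by rintro rfl; exact hj hi) _ _, fun c hc => ?_⟩
  have hfrom : ∀ i ∈ ((insert j s : Finset J) : Set J), From (Function.update a j u i) (N + 1) := by
    intro i hi
    by_cases hij : i = j
    · subst hij; rwa [Function.update_self]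
    · rw [Function.update_of_ne hij]
      exact (hN i ((Finset.mem_insert.1 hi).resolve_left hij)).mono N.le_succ
  rw [tupNorm_eq_of_from hfrom hc, ← tupNorm_congr (fun i hi => ?_) hc]
  · exact hp c hc
  · by_cases hij : i = j
    · subst hij; rw [Function.update_self, Function.update_self, hup]
    · rw [Function.update_of_ne hij, Function.update_of_ne hij]
      exact (hN i ((Finset.mem_insert.1 hi).resolve_left hij) N le_rfl).symm

/-- The embedding of the bottom of the tower. -/
noncomputable def base : X 0 →ₗᵢ[ℝ] Lim X ι :=
  let y : X 0 → ∀ n, X n := fun x n => Nat.rec (motive := X) x (fun k => ι k) n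
  have hy : ∀ x, CoherentFrom X ι (y x) 0 := fun _ _ _ => rfl
  { toFun := fun x => mk (y x) 0 (hy x)
    map_add' := fun x x' => ext fun n => by
      induction n with
      | zero => rfl
      | succ n ih =>
        rw [map_add, coord_mk, coord_mk, coord_mk] at ih ⊢
        rw [hy _ n n.zero_le, hy _ n n.zero_le, hy _ n n.zero_le, ih, map_add]
    map_smul' := fun r x => ext fun n => by
      induction n with
      | zero => rfl
      | succ n ih =>
        rw [RingHom.id_apply, map_smul, coord_mk, coord_mk] at ih ⊢
        rw [hy _ n n.zero_le, hy _ n n.zero_le, ih, map_smul]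
    norm_map' := fun x => From.norm_eq (N := 0) (hy x) }

theorem coord_base_succ (x : X 0) (n : ℕ) :
    coord (n + 1) (base x : Lim X ι) = ι n (coord n (base x : Lim X ι)) := rfl

theorem coord_base_zero (x : X 0) : coord 0 (base x : Lim X ι) = x := rfl

variable {Γ : Type*} [Group Γ] (ρ : ∀ n, Γ →* (X n →ₗᵢ[ℝ] X n))
  (hρ : ∀ n γ x, ι n (ρ n γ x) = ρ (n + 1) γ (ι n x))

include hρ in
theorem coherentFrom_act {u : Lim X ι} {N : ℕ} (h : From u N) (γ : Γ) :
    CoherentFrom X ι (fun n => ρ n γ (coord n u)) N := fun n hn => by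
  have := h n hn
  simp only at this
  simp only [this, hρ]

/-- The coordinatewise action on the limit. -/
noncomputable def act : Γ →* (Lim X ι →ₗᵢ[ℝ] Lim X ι) where
  toFun γ :=
    { toFun := fun u => mk (fun n => ρ n γ (coord n u)) (exists_from u).choose
        (coherentFrom_act ρ hρ (exists_from u).choose_spec γ)
      map_add' := fun u u' => ext fun n => by
        rw [map_add, coord_mk, coord_mk, coord_mk, map_add, map_add]
      map_smul' := fun r u => ext fun n => by
        rw [RingHom.id_apply, map_smul, coord_mk, coord_mk, map_smul, map_smul]
      norm_map' := fun u => by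
        have h := (exists_from u).choose_spec
        rw [h.norm_eq]
        have h' : From (mk _ _ (coherentFrom_act ρ hρ h γ)) _ := coherentFrom_act ρ hρ h γ
        refine h'.norm_eq.trans ?_
        exact (ρ _ γ).norm_map _ }
  map_one' := LinearIsometry.ext fun u => ext fun n => by
    change ρ n 1 (coord n u) = coord n u
    rw [map_one]; rfl
  map_mul' γ γ' := LinearIsometry.ext fun u => ext fun n => by
    change ρ n (γ * γ') (coord n u) = ρ n γ (ρ n γ' (coord n u))
    rw [map_mul]; rfl

theorem coord_act (γ : Γ) (u : Lim X ι) (n : ℕ) :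
    coord n (act ρ hρ γ u) = ρ n γ (coord n u) := rfl

theorem From.act {u : Lim X ι} {N : ℕ} (h : From u N) (γ : Γ) : From (act ρ hρ γ u) N :=
  coherentFrom_act ρ hρ h γ

theorem act_base (γ : Γ) (x : X 0) : act ρ hρ γ (base x) = base (ρ 0 γ x) := by
  refine ext fun n => ?_
  rw [coord_act]
  induction n with
  | zero => rfl
  | succ n ih => rw [coord_base_succ, coord_base_succ, ← ih, hρ]

theorem continuous_act [TopologicalSpace Γ] (hcont : ∀ n x, Continuous fun γ => ρ n γ x)
    (u : Lim X ι) : Continuous fun γ => act ρ hρ γ u := by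
  obtain ⟨N, hN⟩ := exists_from u
  rw [continuous_iff_continuousAt]
  intro γ₀
  rw [ContinuousAt, tendsto_iff_dist_tendsto_zero]
  have h := tendsto_iff_dist_tendsto_zero.1 ((hcont N (coord N u)).tendsto γ₀)
  refine h.congr fun γ => ?_
  rw [dist_eq_norm, dist_eq_norm, norm_sub_of_from (hN.act ρ hρ γ) (hN.act ρ hρ γ₀), coord_act, coord_act]

end Lim

end Limit

/-- Every separable normed space with a continuous isometric action embeds equivariantly into one
with the exact one-point extension property. -/
theorem GSpace.exists_extExact {Γ : Type*} [Group Γ] [TopologicalSpace Γ] (A : GSpace.{v} Γ) :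
    ∃ (U : Type v) (_ : SeminormedAddCommGroup U) (_ : NormedSpace ℝ U)
      (ρ : Γ →* (U →ₗᵢ[ℝ] U)) (j : A.carrier →ₗᵢ[ℝ] U), TopologicalSpace.SeparableSpace U ∧
      ExtExact U ∧ (∀ u, Continuous fun γ => ρ γ u) ∧ ∀ γ x, ρ γ (j x) = j (A.act γ x) := by
  choose next ι hι hone using fun B : GSpace.{v} Γ => B.exists_step
  let tower : ℕ → GSpace.{v} Γ := fun n => Nat.rec (motive := fun _ => GSpace.{v} Γ) A
    (fun _ B => next B) n
  let X : ℕ → Type v := fun n => (tower n).carrier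
  let emb : ∀ n, X n →ₗᵢ[ℝ] X (n + 1) := fun n => ι (tower n)
  have : ∀ n, TopologicalSpace.SeparableSpace (X n) := fun n => (tower n).sep
  let ρ : ∀ n, Γ →* (X n →ₗᵢ[ℝ] X n) := fun n => (tower n).act
  have hρ : ∀ (n : ℕ) (γ : Γ) (x : X n), emb n (ρ n γ x) = ρ (n + 1) γ (emb n x) :=
    fun n => hι (tower n)
  exact ⟨Lim X emb, inferInstance, inferInstance,
    Lim.act ρ hρ,
    Lim.base (X := X) (ι := emb), Lim.separableSpace, Lim.extExact fun n => hone (tower n),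
    Lim.continuous_act _ hρ fun n => (tower n).cont, Lim.act_base _ hρ⟩

/-! ### Transfer of the action -/

/-- An isometric action on a dense subspace extends to the whole space, with continuous orbit maps
if the original ones are. -/
theorem exists_extended_action {Γ : Type*} [Group Γ] [TopologicalSpace Γ] {U : Type*}
    [SeminormedAddCommGroup U] [NormedSpace ℝ U] {G : Type*} [NormedAddCommGroup G]
    [NormedSpace ℝ G] [CompleteSpace G] (ρ : Γ →* (U →ₗᵢ[ℝ] U))
    (hρ : ∀ u, Continuous fun γ => ρ γ u) (e : U →ₗᵢ[ℝ] G) (he : DenseRange e) :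
    ∃ Θ : Γ → (G ≃ₗᵢ[ℝ] G), (∀ γ γ', Θ (γ * γ') = Θ γ * Θ γ') ∧
      (∀ x, Continuous fun γ => Θ γ x) ∧ ∀ γ u, Θ γ (e u) = e (ρ γ u) := by
  have hinv : ∀ γ u, ρ γ⁻¹ (ρ γ u) = u := fun γ u => by
    have : (ρ γ⁻¹ * ρ γ) u = u := by rw [← map_mul, inv_mul_cancel, map_one]; rfl
    exact this
  let ρ' : Γ → U ≃ₗ[ℝ] U := fun γ =>
    { (ρ γ).toLinearMap with
      invFun := ρ γ⁻¹
      left_inv := hinv γ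
      right_inv := fun u => by
        have := hinv γ⁻¹ u
        rwa [inv_inv] at this }
  have hn : ∀ γ u, ‖e.toLinearMap (ρ' γ u)‖ = ‖e.toLinearMap u‖ := fun γ u =>
    ((e.norm_map _).trans ((ρ γ).norm_map u)).trans (e.norm_map u).symm
  let Θ : Γ → (G ≃ₗᵢ[ℝ] G) := fun γ =>
    (ρ' γ).extendOfIsometry e.toLinearMap e.toLinearMap he he (hn γ)
  have hΘ : ∀ γ u, Θ γ (e u) = e (ρ γ u) := fun γ u =>
    (ρ' γ).extendOfIsometry_eq e.toLinearMap e.toLinearMap he he (hn γ) u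
  refine ⟨Θ, fun γ γ' => ?_, fun x => ?_, hΘ⟩
  · refine LinearIsometryEquiv.ext fun x => ?_
    refine congrFun (he.equalizer (Θ (γ * γ')).continuous (Θ γ * Θ γ').continuous ?_) x
    funext u
    change Θ (γ * γ') (e u) = Θ γ (Θ γ' (e u))
    rw [hΘ, hΘ, hΘ, map_mul]; rfl
  · refine continuous_of_uniform_approx_of_continuous fun w hw => ?_
    obtain ⟨ε, hε, hεw⟩ := Metric.mem_uniformity_dist.1 hw
    obtain ⟨u, hu⟩ := he.exists_dist_lt x hε
    refine ⟨fun γ => Θ γ (e u), ?_, fun γ => hεw ?_⟩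
    · simp only [hΘ]
      exact e.continuous.comp (hρ u)
    · rwa [(Θ γ).dist_map]

/-- The tautological action of the linear isometry group. -/
noncomputable def tautAction (E : Type*) [NormedAddCommGroup E] [NormedSpace ℝ E] :
    (E ≃ₗᵢ[ℝ] E) →* (E →ₗᵢ[ℝ] E) where
  toFun φ := φ.toLinearIsometry
  map_one' := rfl
  map_mul' _ _ := rfl

end Gurarij

/-- Every separable real Banach space `E` is `g`-embeddable into any separable real
Banach space `G` with the Gurarij property: there are a linear isometric embedding
`j : E → G` and a continuous group homomorphism `Θ : Iso_L(E) → Iso_L(G)` (topologies of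
pointwise convergence) such that `Θ φ` extends `φ` along `j` for every `φ`. -/
theorem separable_banach_gEmbeds_in_gurarij (G : Type u) [NormedAddCommGroup G]
    [NormedSpace ℝ G] [CompleteSpace G] [TopologicalSpace.SeparableSpace G]
    (hG : GurarijProperty G)
    (E : Type v) [NormedAddCommGroup E] [NormedSpace ℝ E] [CompleteSpace E]
    [TopologicalSpace.SeparableSpace E] :
    ∃ (j : E →ₗᵢ[ℝ] G) (Θ : (E ≃ₗᵢ[ℝ] E) → (G ≃ₗᵢ[ℝ] G)),
      (∀ φ ψ : E ≃ₗᵢ[ℝ] E, Θ (φ * ψ) = Θ φ * Θ ψ) ∧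
      @Continuous _ _ (linIsoPtTop E) (linIsoPtTop G) Θ ∧
      ∀ (φ : E ≃ₗᵢ[ℝ] E) (a : E), Θ φ (j a) = j (φ a) := by
  let _ : TopologicalSpace (E ≃ₗᵢ[ℝ] E) := linIsoPtTop E
  let A : Gurarij.GSpace.{v} (E ≃ₗᵢ[ℝ] E) :=
    { carrier := E
      sep := inferInstance
      act := Gurarij.tautAction E
      cont := fun x => (continuous_apply x).comp continuous_induced_dom }
  obtain ⟨U, _, _, ρ, j, hsep, hU, hρ, hj⟩ := A.exists_extExact
  -- the completion of `U` is linearly isometric to `G`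
  obtain ⟨Φ⟩ := Gurarij.ExtApprox.nonempty_linearIsometryEquiv
    (hU.approx (UniformSpace.Completion.toComplₗᵢ (𝕜 := ℝ) (E := U))
      UniformSpace.Completion.denseRange_coe)
    ((Gurarij.extExact_of_gurarij hG).approx LinearIsometry.id denseRange_id)
  let e : U →ₗᵢ[ℝ] G := Φ.toLinearIsometry.comp UniformSpace.Completion.toComplₗᵢ
  have he : DenseRange e :=
    Φ.surjective.denseRange.comp UniformSpace.Completion.denseRange_coe Φ.continuous
  obtain ⟨Θ, hmul, hcont, hΘ⟩ := Gurarij.exists_extended_action ρ hρ e he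
  refine ⟨e.comp j, Θ, hmul, continuous_induced_rng.2 (continuous_pi hcont), fun φ a => ?_⟩
  exact (hΘ φ (j a)).trans (congrArg e (hj φ a))
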